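/- arXiv:2005.07603 — 2 statements merged into one kernel-verified Lean document; each statement's English description precedes it below -/
import Mathlib

section
/- Every morphism in the box category □ factors as a composite (∂_{k_1,ε_1} ⋯ ∂_{k_t,ε_t}) ∘ (γ_{j_1,δ_1} ⋯ γ_{j_s,δ_s}) ∘ (σ_{i_1} ⋯ σ_{i_r}) with 1 ≤ i_1 < ⋯ < i_r, 1 ≤ j_1 ≤ ⋯ ≤ j_s, and k_1 > ⋯ > k_t ≥ 1; and this factorization is unique if additionally δ_p ≠ δ_{p+1} whenever j_p = j_{p+1}. -/
/-- The poset `[1]^n = {0 ≤ 1}^n`, modeled as functions `Fin n → Bool`. -/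
def Cube (n : ℕ) : Type := Fin n → Bool

/-- The face map `∂_{i,ε} : [1]^n → [1]^(n+1)` inserting `ε` at position `i` (0-based). -/
def face {n : ℕ} (i : Fin (n + 1)) (ε : Bool) (x : Cube n) : Cube (n + 1) :=
  Fin.insertNth i ε x

/-- The degeneracy `σ_i : [1]^(n+1) → [1]^n` deleting coordinate `i` (0-based). -/
def degen {n : ℕ} (i : Fin (n + 1)) (x : Cube (n + 1)) : Cube n :=
  fun j => x (i.succAbove j)

/-- The connection `γ_{i,ε} : [1]^(n+2) → [1]^(n+1)` merging coordinates `i` and `i+1`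
(0-based), using `max` when `ε = true` and `min` when `ε = false`. -/
def conn {n : ℕ} (i : Fin (n + 1)) (ε : Bool) (x : Cube (n + 2)) : Cube (n + 1) :=
  fun j =>
    if j.val < i.val then x j.castSucc
    else if j.val = i.val then
      (if ε then x i.castSucc || x i.succ else x i.castSucc && x i.succ)
    else x j.succ

/-- The predicate on functions `[1]^m → [1]^n` of being a morphism of the box category `□`,
i.e. a composite of faces, degeneracies and connections. -/
inductive IsBoxMap : {m n : ℕ} → (Cube m → Cube n) → Prop
  | id {n : ℕ} : IsBoxMap (fun x : Cube n => x)
  | face {n : ℕ} (i : Fin (n + 1)) (ε : Bool) : IsBoxMap (face i ε)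
  | degen {n : ℕ} (i : Fin (n + 1)) : IsBoxMap (degen i)
  | conn {n : ℕ} (i : Fin (n + 1)) (ε : Bool) : IsBoxMap (conn i ε)
  | comp {m n k : ℕ} {f : Cube m → Cube n} {g : Cube n → Cube k} :
      IsBoxMap f → IsBoxMap g → IsBoxMap (g ∘ f)

/-- The face map with 1-based index `p` (as in the paper); out-of-range indices are clamped. -/
def face1 {n : ℕ} (p : ℕ) (ε : Bool) : Cube n → Cube (n + 1) :=
  face ⟨min (p - 1) n, by omega⟩ ε

/-- The degeneracy with 1-based index `p`; out-of-range indices are clamped. -/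
def degen1 {n : ℕ} (p : ℕ) : Cube (n + 1) → Cube n :=
  degen ⟨min (p - 1) n, by omega⟩

/-- The connection with 1-based index `p`; out-of-range indices are clamped. -/
def conn1 {n : ℕ} (p : ℕ) (ε : Bool) : Cube (n + 2) → Cube (n + 1) :=
  conn ⟨min (p - 1) n, by omega⟩ ε

theorem face1_isBoxMap {n : ℕ} (p : ℕ) (ε : Bool) : IsBoxMap (face1 (n := n) p ε) :=
  IsBoxMap.face _ _

theorem degen1_isBoxMap {n : ℕ} (p : ℕ) : IsBoxMap (degen1 (n := n) p) :=
  IsBoxMap.degen _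

/-- Transport a cube along an equality of dimensions. -/
def cubeCast {m n : ℕ} (h : m = n) (x : Cube m) : Cube n := fun j => x (Fin.cast h.symm j)

/-- The composite `σ_{i_1} ⋯ σ_{i_r}` of degeneracies (1-based indices, the head of the
list being the outermost, i.e. last applied, degeneracy), as a map `[1]^{n+r} → [1]^n`. -/
def sigmaWord : (l : List ℕ) → {n : ℕ} → Cube (n + l.length) → Cube n
  | [], _, x => x
  | p :: l, n, x => degen1 p (sigmaWord l (n := n + 1) (cubeCast (by simp only [List.length_cons]; omega) x))

/-- Validity of the 1-based indices in a word of degeneracies with codomain `[1]^n`. -/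
def sigmaValid : List ℕ → ℕ → Prop
  | [], _ => True
  | p :: l, n => 1 ≤ p ∧ p ≤ n + 1 ∧ sigmaValid l (n + 1)

/-- The composite `γ_{j_1,δ_1} ⋯ γ_{j_s,δ_s}` of connections (1-based indices, head of the
list outermost), as a map `[1]^{n+s} → [1]^n`. -/
def gammaWord : (l : List (ℕ × Bool)) → {n : ℕ} → Cube (n + l.length) → Cube n
  | [], _, x => x
  | (p, ε) :: l, n + 1, x => conn1 p ε (gammaWord l (n := n + 2) (cubeCast (by simp only [List.length_cons]; omega) x))
  | _ :: _, 0, _ => fun _ => false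

/-- Validity of the 1-based indices in a word of connections with codomain `[1]^n`. -/
def gammaValid : List (ℕ × Bool) → ℕ → Prop
  | [], _ => True
  | (p, _) :: l, n => 1 ≤ p ∧ p ≤ n ∧ gammaValid l (n + 1)

/-- The composite `∂_{k_1,ε_1} ⋯ ∂_{k_t,ε_t}` of faces (1-based indices, head of the
list outermost), as a map `[1]^n → [1]^{n+t}`. -/
def deltaWord : (l : List (ℕ × Bool)) → {n : ℕ} → Cube n → Cube (n + l.length)
  | [], _, x => x
  | (p, ε) :: l, n, x => cubeCast (by simp only [List.length_cons]; omega) (face1 p ε (deltaWord l x))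

/-- Validity of the 1-based indices in a word of faces with domain `[1]^n`. -/
def deltaValid : List (ℕ × Bool) → ℕ → Prop
  | [], _ => True
  | (p, _) :: l, n => 1 ≤ p ∧ p ≤ n + l.length + 1 ∧ deltaValid l n

/-!
Letting a morphism act on an initial segment of an infinite binary sequence, and shift the rest,
maps the box category faithfully to a monoid, in which words can be manipulated without dimensions.

Existence: the cubical identities move faces to the left and degeneracies to the right, and each of
the three resulting words is put in order by insertion sort, the identities between generators of
the same kind providing the exchange of two adjacent letters.

Uniqueness: connections and degeneracies are split epimorphisms, so the faces are the coordinates of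
the image that are constant, and can be cancelled. A word of connections depends on every coordinate
of its argument, so the degeneracies are the coordinates on which the morphism does not depend, and
can be cancelled too. Two words of connections are compared through their last letters: composing
with a face that cancels one of them shows that the letters agree.
-/

namespace BoxNormalForm

/-! ### Cubical identities on sequences -/

/-- The monoid of self-maps of infinite binary sequences, in which a morphism of cubes is recorded
by its action on an initial segment followed by a shift; dimensions are thereby forgotten. Sequences
are indexed so that coordinate `j ≥ 1` of a cube sits at index `j`, index `0` being a dummy. -/
abbrev StreamEnd : Type := Function.End (ℕ → Bool)

/-- The face `∂_{p,ε}`, for `a = (p, ε)`, acting on sequences. -/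
def streamFace (a : ℕ × Bool) : StreamEnd := fun x j =>
  if j < a.1 then x j else if j = a.1 then a.2 else x (j - 1)

/-- The degeneracy `σ_p` acting on sequences. -/
def streamDegen (p : ℕ) : StreamEnd := fun x j =>
  if j < p then x j else x (j + 1)

/-- The connection `γ_{p,ε}`, for `a = (p, ε)`, acting on sequences. -/
def streamConn (a : ℕ × Bool) : StreamEnd := fun x j =>
  if j < a.1 then x j
  else if j = a.1 then (if a.2 then x j || x (j + 1) else x j && x (j + 1))
  else x (j + 1)

theorem one_apply (x : ℕ → Bool) : (1 : StreamEnd) x = x := rfl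

theorem mul_apply (F G : StreamEnd) (x : ℕ → Bool) : (F * G) x = F (G x) := rfl

theorem streamFace_apply (a : ℕ × Bool) (x : ℕ → Bool) (j : ℕ) :
    streamFace a x j = if j < a.1 then x j else if j = a.1 then a.2 else x (j - 1) := rfl

theorem streamDegen_apply (p : ℕ) (x : ℕ → Bool) (j : ℕ) :
    streamDegen p x j = if j < p then x j else x (j + 1) := rfl

theorem streamConn_apply (a : ℕ × Bool) (x : ℕ → Bool) (j : ℕ) :
    streamConn a x j = if j < a.1 then x j
      else if j = a.1 then (if a.2 then x j || x (j + 1) else x j && x (j + 1))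
      else x (j + 1) := rfl

theorem streamFace_mul_streamFace {p q : ℕ} (h : p ≤ q) (ε δ : Bool) :
    streamFace (p, ε) * streamFace (q, δ) = streamFace (q + 1, δ) * streamFace (p, ε) := by
  funext x j
  simp only [mul_apply, streamFace_apply]
  grind

theorem streamDegen_mul_streamDegen {p q : ℕ} (h : q ≤ p) :
    streamDegen p * streamDegen q = streamDegen q * streamDegen (p + 1) := by
  funext x j
  simp only [mul_apply, streamDegen_apply]
  grind

theorem streamConn_mul_streamConn {p q : ℕ} (h : q < p) (ε δ : Bool) :
    streamConn (p, ε) * streamConn (q, δ) = streamConn (q, δ) * streamConn (p + 1, ε) := by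
  funext x j
  simp only [mul_apply, streamConn_apply]
  grind

theorem streamConn_mul_self (a : ℕ × Bool) :
    streamConn a * streamConn a = streamConn a * streamConn (a.1 + 1, a.2) := by
  funext x j
  simp only [mul_apply, streamConn_apply]
  grind

theorem streamDegen_mul_streamFace_of_lt {p q : ℕ} (h : p < q) (ε : Bool) :
    streamDegen p * streamFace (q, ε) = streamFace (q - 1, ε) * streamDegen p := by
  funext x j
  simp only [mul_apply, streamDegen_apply, streamFace_apply]
  grind

theorem streamDegen_mul_streamFace_of_gt {p q : ℕ} (h : q < p) (ε : Bool) :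
    streamDegen p * streamFace (q, ε) = streamFace (q, ε) * streamDegen (p - 1) := by
  funext x j
  simp only [mul_apply, streamDegen_apply, streamFace_apply]
  grind

theorem streamDegen_mul_streamFace_self (p : ℕ) (ε : Bool) :
    streamDegen p * streamFace (p, ε) = 1 := by
  funext x j
  simp only [one_apply, mul_apply, streamDegen_apply, streamFace_apply]
  grind

theorem streamDegen_mul_streamConn_of_lt {p q : ℕ} (h : p < q) (ε : Bool) :
    streamDegen p * streamConn (q, ε) = streamConn (q - 1, ε) * streamDegen p := by
  funext x j
  simp only [mul_apply, streamDegen_apply, streamConn_apply]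
  grind

theorem streamDegen_mul_streamConn_of_gt {p q : ℕ} (h : q < p) (ε : Bool) :
    streamDegen p * streamConn (q, ε) = streamConn (q, ε) * streamDegen (p + 1) := by
  funext x j
  simp only [mul_apply, streamDegen_apply, streamConn_apply]
  grind

theorem streamDegen_mul_streamConn_self (p : ℕ) (ε : Bool) :
    streamDegen p * streamConn (p, ε) = streamDegen p * streamDegen p := by
  funext x j
  simp only [mul_apply, streamDegen_apply, streamConn_apply]
  grind

theorem streamConn_mul_streamFace_of_gt {p q : ℕ} (h : q < p) (ε δ : Bool) :
    streamConn (p, ε) * streamFace (q, δ) = streamFace (q, δ) * streamConn (p - 1, ε) := by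
  funext x j
  simp only [mul_apply, streamConn_apply, streamFace_apply]
  grind

theorem streamConn_mul_streamFace_of_lt {p q : ℕ} (h : p + 1 < q) (ε δ : Bool) :
    streamConn (p, ε) * streamFace (q, δ) = streamFace (q - 1, δ) * streamConn (p, ε) := by
  funext x j
  simp only [mul_apply, streamConn_apply, streamFace_apply]
  grind

theorem streamConn_mul_streamFace_absorb {p q : ℕ} (h : q = p ∨ q = p + 1) (ε : Bool) :
    streamConn (p, ε) * streamFace (q, ε) = streamFace (p, ε) * streamDegen p := by
  funext x j
  simp only [mul_apply, streamConn_apply, streamFace_apply, streamDegen_apply]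
  grind

theorem streamConn_mul_streamFace_cancel {p q : ℕ} (h : q = p ∨ q = p + 1) (ε : Bool) :
    streamConn (p, ε) * streamFace (q, !ε) = 1 := by
  funext x j
  simp only [one_apply, mul_apply, streamConn_apply, streamFace_apply]
  grind

/-! ### Sorting words by exchanging adjacent letters -/

section Sorting

variable {α M : Type*} [Monoid M]

/-- The letters of `l` compose to a map from dimension `m` to dimension `n`, the head being applied
last; `ok a m n` says that the letter `a` is a map from dimension `m` to dimension `n`. -/
def IsPath (ok : α → ℕ → ℕ → Prop) : List α → ℕ → ℕ → Prop
  | [], m, n => m = n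
  | a :: l, m, n => ∃ k, ok a k n ∧ IsPath ok l m k

theorem IsPath.append {ok : α → ℕ → ℕ → Prop} {l l' : List α} {m k n : ℕ}
    (hl : IsPath ok l k n) (hl' : IsPath ok l' m k) : IsPath ok (l ++ l') m n := by
  induction l generalizing n with
  | nil => exact hl ▸ hl'
  | cons a l ih =>
    obtain ⟨j, ha, hl⟩ := hl
    exact ⟨j, ha, ih hl⟩

/-- A rewriting rule `a b ↦ (f b) (g a)` for words in the generators `gen`, applicable to all
adjacent letters that are not in the relation `r`, which allows insertion sort with respect to
`r`. -/
structure IsExchange (gen : α → M) (ok : α → ℕ → ℕ → Prop) (r : α → α → Prop) (f g : α → α) :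
    Prop where
  mul_eq {a b : α} : ¬r a b → gen a * gen b = gen (f b) * gen (g a)
  typed {a b : α} {m k n : ℕ} : ¬r a b → ok a k n → ok b m k →
    ∃ k', ok (f b) k' n ∧ ok (g a) m k'
  rel {a b : α} : ¬r a b → r (f b) (g a)
  mono {a b : α} : r a b → r (f a) (f b)

namespace IsExchange

variable {gen : α → M} {ok : α → ℕ → ℕ → Prop} {r : α → α → Prop} {f g : α → α}

/-- The last conclusion controls the letter that ends up in front of the sorted word. -/
theorem exists_insert (h : IsExchange gen ok r f g) {a : α} {l : List α} {m n : ℕ}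
    (hl : l.IsChain r) (hal : IsPath ok (a :: l) m n) :
    ∃ l' : List α, l'.IsChain r ∧ IsPath ok l' m n ∧
      (l'.map gen).prod = gen a * (l.map gen).prod ∧
      ∀ c, r (f c) a → (c :: l).IsChain r → (f c :: l').IsChain r := by
  induction l generalizing a m n with
  | nil => exact ⟨[a], .singleton a, hal, by simp, fun c hc _ => by simpa using hc⟩
  | cons b l ih =>
    by_cases hab : r a b
    · exact ⟨a :: b :: l, hl.cons_cons hab, hal, by simp,
        fun c hc _ => (hl.cons_cons hab).cons_cons hc⟩
    obtain ⟨k, ha, j, hb, hpath⟩ := hal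
    obtain ⟨k', hb', ha'⟩ := h.typed hab ha hb
    obtain ⟨l', -, hpath', hprod, hhead⟩ := ih hl.tail ⟨j, ha', hpath⟩
    have hchain : (f b :: l').IsChain r := hhead b (h.rel hab) hl
    refine ⟨f b :: l', hchain, ⟨k', hb', hpath'⟩, ?_, fun c _ hcb =>
      hchain.cons_cons (h.mono (List.isChain_cons_cons.1 hcb).1)⟩
    simp only [List.map_cons, List.prod_cons, hprod, ← mul_assoc, h.mul_eq hab]

theorem exists_isChain (h : IsExchange gen ok r f g) {l : List α} {m n : ℕ}
    (hl : IsPath ok l m n) :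
    ∃ l' : List α, l'.IsChain r ∧ IsPath ok l' m n ∧ (l'.map gen).prod = (l.map gen).prod := by
  induction l generalizing n with
  | nil => exact ⟨[], .nil, hl, rfl⟩
  | cons a l ih =>
    obtain ⟨k, ha, hl⟩ := hl
    obtain ⟨l₁, hchain, hpath, hprod⟩ := ih hl
    obtain ⟨l₂, hchain', hpath', hprod', -⟩ := h.exists_insert hchain ⟨k, ha, hpath⟩
    exact ⟨l₂, hchain', hpath', by rw [hprod', hprod, List.map_cons, List.prod_cons]⟩

end IsExchange

end Sorting

/-- `∂_{p,ε}`, for `a = (p, ε)`, is a map from dimension `m` to dimension `n`. -/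
def FaceTyped (a : ℕ × Bool) (m n : ℕ) : Prop := n = m + 1 ∧ 1 ≤ a.1 ∧ a.1 ≤ n

/-- `σ_p` is a map from dimension `m` to dimension `n`. -/
def DegenTyped (p m n : ℕ) : Prop := m = n + 1 ∧ 1 ≤ p ∧ p ≤ m

/-- `γ_{p,ε}`, for `a = (p, ε)`, is a map from dimension `m` to dimension `n`. -/
def ConnTyped (a : ℕ × Bool) (m n : ℕ) : Prop := m = n + 1 ∧ 1 ≤ a.1 ∧ a.1 ≤ n

/-- The condition on consecutive connections `a`, `b` in a normal form. It is not transitive. -/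
def ConnPrecedes (a b : ℕ × Bool) : Prop := a.1 ≤ b.1 ∧ (a.1 = b.1 → a.2 ≠ b.2)

theorem isExchange_streamFace :
    IsExchange streamFace FaceTyped (fun a b => b.1 < a.1) (fun a => (a.1 + 1, a.2)) id where
  mul_eq h := streamFace_mul_streamFace (not_lt.1 h) _ _
  typed {a b m k n} h ha hb := ⟨k, by grind [FaceTyped], by grind [FaceTyped]⟩
  rel h := by grind
  mono h := by grind

theorem isExchange_streamDegen :
    IsExchange streamDegen DegenTyped (· < ·) id (· + 1) where
  mul_eq h := streamDegen_mul_streamDegen (not_lt.1 h)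
  typed {a b m k n} h ha hb := ⟨k, by grind [DegenTyped], by grind [DegenTyped]⟩
  rel h := by grind
  mono h := h

theorem not_connPrecedes_iff {a b : ℕ × Bool} : ¬ConnPrecedes a b ↔ b.1 < a.1 ∨ a = b := by
  grind [ConnPrecedes]

theorem isExchange_streamConn :
    IsExchange streamConn ConnTyped ConnPrecedes id (fun a => (a.1 + 1, a.2)) where
  mul_eq h := by
    obtain h | rfl := not_connPrecedes_iff.1 h
    · exact streamConn_mul_streamConn h _ _
    · exact streamConn_mul_self _
  typed {a b m k n} h ha hb := ⟨k, by grind [ConnTyped, ConnPrecedes], by grind [ConnTyped]⟩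
  rel h := by grind [ConnPrecedes]
  mono h := h

/-! ### Separating faces, connections and degeneracies -/

/-- `F` is the action on sequences of connections after degeneracies, from dimension `m` to
dimension `n`. -/
def EpiFactors (m n : ℕ) (F : StreamEnd) : Prop :=
  ∃ (k : ℕ) (lg : List (ℕ × Bool)) (ls : List ℕ), IsPath ConnTyped lg k n ∧
    IsPath DegenTyped ls m k ∧ F = (lg.map streamConn).prod * (ls.map streamDegen).prod

/-- `F` is the action on sequences of faces after connections after degeneracies, from dimension
`m` to dimension `n`, in no particular order within the three groups. -/
def Factors (m n : ℕ) (F : StreamEnd) : Prop :=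
  ∃ (k : ℕ) (ld : List (ℕ × Bool)) (E : StreamEnd), IsPath FaceTyped ld k n ∧
    EpiFactors m k E ∧ F = (ld.map streamFace).prod * E

theorem EpiFactors.streamConn_mul {a : ℕ × Bool} {m n n' : ℕ} {E : StreamEnd}
    (ha : ConnTyped a n n') (hE : EpiFactors m n E) : EpiFactors m n' (streamConn a * E) := by
  obtain ⟨k, lg, ls, hlg, hls, rfl⟩ := hE
  exact ⟨k, a :: lg, ls, ⟨n, ha, hlg⟩, hls, by simp only [List.map_cons, List.prod_cons, mul_assoc]⟩

theorem EpiFactors.factors {m n : ℕ} {E : StreamEnd} (hE : EpiFactors m n E) : Factors m n E :=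
  ⟨n, [], E, rfl, hE, (one_mul E).symm⟩

theorem Factors.one (n : ℕ) : Factors n n 1 :=
  EpiFactors.factors ⟨n, [], [], rfl, rfl, rfl⟩

theorem Factors.streamFace_mul {a : ℕ × Bool} {m n n' : ℕ} {F : StreamEnd}
    (ha : FaceTyped a n n') (hF : Factors m n F) : Factors m n' (streamFace a * F) := by
  obtain ⟨k, ld, E, hld, hE, rfl⟩ := hF
  exact ⟨k, a :: ld, E, ⟨n, ha, hld⟩, hE, by simp only [List.map_cons, List.prod_cons, mul_assoc]⟩

/-- A whole word of degeneracies has to be moved at once, because `σ_p γ_p = σ_p σ_p` creates new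
ones. -/
theorem degenWord_mul_streamConn {ls : List ℕ} {a : ℕ × Bool} {m k n : ℕ}
    (hls : IsPath DegenTyped ls k n) (ha : ConnTyped a m k) :
    ∃ ls' : List ℕ,
      (IsPath DegenTyped ls' m n ∧
        (ls.map streamDegen).prod * streamConn a = (ls'.map streamDegen).prod) ∨
      ∃ (b : ℕ × Bool) (j : ℕ), ConnTyped b j n ∧ IsPath DegenTyped ls' m j ∧
        (ls.map streamDegen).prod * streamConn a = streamConn b * (ls'.map streamDegen).prod := by
  induction ls generalizing n with
  | nil => exact ⟨[], .inr ⟨a, m, hls ▸ ha, rfl, by simp⟩⟩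
  | cons p ls ih =>
    obtain ⟨i, hp, hls⟩ := hls
    simp only [List.map_cons, List.prod_cons, mul_assoc]
    obtain ⟨ls', ⟨hls', heq⟩ | ⟨⟨q, ε⟩, j, hb, hls', heq⟩⟩ := ih hls
    · exact ⟨p :: ls', .inl ⟨⟨i, hp, hls'⟩, by simp [heq]⟩⟩
    obtain hlt | rfl | hgt := lt_trichotomy p q
    · refine ⟨p :: ls', .inr ⟨(q - 1, ε), i, by grind [DegenTyped, ConnTyped],
        ⟨j, by grind [DegenTyped, ConnTyped], hls'⟩, ?_⟩⟩
      simp only [heq, List.map_cons, List.prod_cons, ← mul_assoc,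
        streamDegen_mul_streamConn_of_lt hlt]
    · refine ⟨p :: p :: ls', .inl ⟨⟨i, hp, j, by grind [DegenTyped, ConnTyped], hls'⟩, ?_⟩⟩
      simp only [heq, List.map_cons, List.prod_cons, ← mul_assoc, streamDegen_mul_streamConn_self]
    · refine ⟨(p + 1) :: ls', .inr ⟨(q, ε), i, by grind [DegenTyped, ConnTyped],
        ⟨j, by grind [DegenTyped, ConnTyped], hls'⟩, ?_⟩⟩
      simp only [heq, List.map_cons, List.prod_cons, ← mul_assoc,
        streamDegen_mul_streamConn_of_gt hgt]

theorem EpiFactors.degenWord_mul {ls : List ℕ} {m n n' : ℕ} {E : StreamEnd}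
    (hls : IsPath DegenTyped ls n n') (hE : EpiFactors m n E) :
    EpiFactors m n' ((ls.map streamDegen).prod * E) := by
  obtain ⟨k, lg, ls₀, hlg, hls₀, rfl⟩ := hE
  induction lg generalizing ls n n' with
  | nil =>
    obtain rfl : k = n := hlg
    exact ⟨n', [], ls ++ ls₀, rfl, hls.append hls₀, by simp⟩
  | cons a lg ih =>
    obtain ⟨j, ha, hlg⟩ := hlg
    simp only [List.map_cons, List.prod_cons]
    rw [mul_assoc, ← mul_assoc]
    obtain ⟨ls', ⟨hls', heq⟩ | ⟨b, i, hb, hls', heq⟩⟩ := degenWord_mul_streamConn hls ha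
    · rw [heq]
      exact ih hls' hlg
    · rw [heq, mul_assoc]
      exact (ih hls' hlg).streamConn_mul hb

theorem Factors.streamDegen_mul {p m n n' : ℕ} {F : StreamEnd} (hp : DegenTyped p n n')
    (hF : Factors m n F) : Factors m n' (streamDegen p * F) := by
  obtain ⟨k, ld, E, hld, hE, rfl⟩ := hF
  induction ld generalizing p n n' with
  | nil =>
    obtain rfl : k = n := hld
    simpa using (hE.degenWord_mul (ls := [p]) ⟨_, hp, rfl⟩).factors
  | cons a ld ih =>
    obtain ⟨q, ε⟩ := a
    obtain ⟨j, ha, hld⟩ := hld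
    simp only [List.map_cons, List.prod_cons]
    rw [mul_assoc, ← mul_assoc]
    obtain hlt | rfl | hgt := lt_trichotomy p q
    · rw [streamDegen_mul_streamFace_of_lt hlt, mul_assoc]
      exact (ih (n' := j - 1) (by grind [FaceTyped, DegenTyped]) hld).streamFace_mul
        (by grind [FaceTyped, DegenTyped])
    · obtain rfl : j = n' := by grind [FaceTyped, DegenTyped]
      rw [streamDegen_mul_streamFace_self, one_mul]
      exact ⟨k, ld, E, hld, hE, rfl⟩
    · rw [streamDegen_mul_streamFace_of_gt hgt, mul_assoc]
      exact (ih (n' := j - 1) (by grind [FaceTyped, DegenTyped]) hld).streamFace_mul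
        (by grind [FaceTyped, DegenTyped])

theorem Factors.streamConn_mul {a : ℕ × Bool} {m n n' : ℕ} {F : StreamEnd}
    (ha : ConnTyped a n n') (hF : Factors m n F) : Factors m n' (streamConn a * F) := by
  obtain ⟨k, ld, E, hld, hE, rfl⟩ := hF
  induction ld generalizing a n n' with
  | nil =>
    obtain rfl : k = n := hld
    simpa using (hE.streamConn_mul ha).factors
  | cons b ld ih =>
    obtain ⟨p, ε⟩ := a
    obtain ⟨q, δ⟩ := b
    obtain ⟨j, hb, hld⟩ := hld
    simp only [List.map_cons, List.prod_cons]
    rw [mul_assoc, ← mul_assoc]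
    obtain hlt | hgt | hnear : q < p ∨ p + 1 < q ∨ (q = p ∨ q = p + 1) := by lia
    · rw [streamConn_mul_streamFace_of_gt hlt, mul_assoc]
      exact (ih (n' := j - 1) (by grind [FaceTyped, ConnTyped]) hld).streamFace_mul
        (by grind [FaceTyped, ConnTyped])
    · rw [streamConn_mul_streamFace_of_lt hgt, mul_assoc]
      exact (ih (n' := j - 1) (by grind [FaceTyped, ConnTyped]) hld).streamFace_mul
        (by grind [FaceTyped, ConnTyped])
    · obtain rfl | rfl := Bool.eq_or_eq_not δ ε
      · rw [streamConn_mul_streamFace_absorb hnear, mul_assoc]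
        have htail : Factors m j ((ld.map streamFace).prod * E) := ⟨k, ld, E, hld, hE, rfl⟩
        exact (htail.streamDegen_mul (n' := j - 1)
          (by grind [FaceTyped, ConnTyped, DegenTyped])).streamFace_mul
          (by grind [FaceTyped, ConnTyped])
      · obtain rfl : j = n' := by grind [FaceTyped, ConnTyped]
        rw [streamConn_mul_streamFace_cancel hnear, one_mul]
        exact ⟨k, ld, E, hld, hE, rfl⟩

/-! ### From cubes to sequences -/

/-- The cube of dimension `n` formed by the entries `1, …, n` of a sequence. -/
def ofStream (n : ℕ) (z : ℕ → Bool) : Cube n := fun i => z (i + 1)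

theorem ofStream_surjective (n : ℕ) : Function.Surjective (ofStream n) := fun x =>
  ⟨fun j => if h : j - 1 < n then x ⟨j - 1, h⟩ else false, by funext i; simp [ofStream]⟩

/-- `F` acts as `f` on the entries `1, …, m` of a sequence, and carries the rest along. -/
structure IsStreamLift {m n : ℕ} (f : Cube m → Cube n) (F : StreamEnd) : Prop where
  zero (z : ℕ → Bool) : F z 0 = z 0
  coord (z : ℕ → Bool) : ofStream n (F z) = f (ofStream m z)
  tail (z : ℕ → Bool) (j : ℕ) : F z (n + 1 + j) = z (m + 1 + j)

namespace IsStreamLift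

variable {m n k : ℕ} {f g : Cube m → Cube n} {F G : StreamEnd}

theorem stream_unique (hF : IsStreamLift f F) (hG : IsStreamLift f G) : F = G := by
  funext z j
  obtain rfl | ⟨i, rfl⟩ | ⟨i, rfl⟩ : j = 0 ∨ (∃ i : Fin n, j = i + 1) ∨ ∃ i, j = n + 1 + i := by
    obtain hj | hj := le_or_gt j n
    · exact j.eq_zero_or_pos.imp_right fun h => .inl ⟨⟨j - 1, by lia⟩, by grind⟩
    · exact .inr (.inr ⟨j - (n + 1), by lia⟩)
  · rw [hF.zero, hG.zero]
  · exact congrFun ((hF.coord z).trans (hG.coord z).symm) i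
  · rw [hF.tail, hG.tail]

theorem cube_unique (hf : IsStreamLift f F) (hg : IsStreamLift g F) : f = g := by
  funext x
  obtain ⟨z, rfl⟩ := ofStream_surjective m x
  rw [← hf.coord, hg.coord]

theorem comp {g : Cube n → Cube k} (hg : IsStreamLift g G) (hf : IsStreamLift f F) :
    IsStreamLift (g ∘ f) (G * F) where
  zero z := by rw [mul_apply, hg.zero, hf.zero]
  coord z := by rw [mul_apply, hg.coord, hf.coord, Function.comp_apply]
  tail z j := by rw [mul_apply, hg.tail, hf.tail]

end IsStreamLift

theorem isStreamLift_id (n : ℕ) : IsStreamLift (id : Cube n → Cube n) 1 :=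
  ⟨fun _ => rfl, fun _ => rfl, fun _ _ => rfl⟩

theorem isStreamLift_cubeCast {m n : ℕ} (h : m = n) : IsStreamLift (cubeCast h) 1 := by
  subst h
  exact isStreamLift_id m

theorem isStreamLift_face {n : ℕ} (i : Fin (n + 1)) (ε : Bool) :
    IsStreamLift (face i ε) (streamFace (i + 1, ε)) where
  zero z := by grind [streamFace_apply]
  coord z := Fin.eq_insertNth_iff.2
    ⟨by simp [ofStream, streamFace_apply], by
      funext j
      simp only [Fin.removeNth, ofStream, streamFace_apply, Fin.succAbove]
      grind⟩
  tail z j := by grind [streamFace_apply]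

theorem isStreamLift_degen {n : ℕ} (i : Fin (n + 1)) :
    IsStreamLift (degen i) (streamDegen (i + 1)) where
  zero z := by grind [streamDegen_apply]
  coord z := by
    funext j
    simp only [ofStream, degen, streamDegen_apply, Fin.succAbove]
    grind
  tail z j := by grind [streamDegen_apply]

theorem isStreamLift_conn {n : ℕ} (i : Fin (n + 1)) (ε : Bool) :
    IsStreamLift (conn i ε) (streamConn (i + 1, ε)) where
  zero z := by grind [streamConn_apply]
  coord z := by
    funext j
    simp only [ofStream, conn, streamConn_apply]
    grind
  tail z j := by grind [streamConn_apply]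

theorem isStreamLift_face1 {n p : ℕ} (hp : 1 ≤ p) (hpn : p ≤ n + 1) (ε : Bool) :
    IsStreamLift (face1 (n := n) p ε) (streamFace (p, ε)) := by
  simpa [face1, show min (p - 1) n + 1 = p by lia] using
    isStreamLift_face (n := n) ⟨min (p - 1) n, by lia⟩ ε

theorem isStreamLift_degen1 {n p : ℕ} (hp : 1 ≤ p) (hpn : p ≤ n + 1) :
    IsStreamLift (degen1 (n := n) p) (streamDegen p) := by
  simpa [degen1, show min (p - 1) n + 1 = p by lia] using
    isStreamLift_degen (n := n) ⟨min (p - 1) n, by lia⟩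

theorem isStreamLift_conn1 {n p : ℕ} (hp : 1 ≤ p) (hpn : p ≤ n + 1) (ε : Bool) :
    IsStreamLift (conn1 (n := n) p ε) (streamConn (p, ε)) := by
  simpa [conn1, show min (p - 1) n + 1 = p by lia] using
    isStreamLift_conn (n := n) ⟨min (p - 1) n, by lia⟩ ε

theorem isStreamLift_deltaWord {l : List (ℕ × Bool)} {n : ℕ} (hl : deltaValid l n) :
    IsStreamLift (deltaWord l (n := n)) (l.map streamFace).prod := by
  induction l with
  | nil => exact isStreamLift_id n
  | cons a l ih =>
    obtain ⟨hp, hpn, hl⟩ := hl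
    exact (isStreamLift_cubeCast _).comp ((isStreamLift_face1 hp hpn _).comp (ih hl))

theorem isStreamLift_sigmaWord {l : List ℕ} {n : ℕ} (hl : sigmaValid l n) :
    IsStreamLift (sigmaWord l (n := n)) (l.map streamDegen).prod := by
  induction l generalizing n with
  | nil => exact isStreamLift_id n
  | cons p l ih =>
    obtain ⟨hp, hpn, hl⟩ := hl
    exact (isStreamLift_degen1 hp hpn).comp ((ih hl).comp (isStreamLift_cubeCast _))

theorem isStreamLift_gammaWord {l : List (ℕ × Bool)} {n : ℕ} (hl : gammaValid l n) :
    IsStreamLift (gammaWord l (n := n)) (l.map streamConn).prod := by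
  induction l generalizing n with
  | nil => exact isStreamLift_id n
  | cons a l ih =>
    obtain ⟨hp, hpn, hl⟩ := hl
    obtain _ | n := n
    · lia
    exact (isStreamLift_conn1 hp hpn _).comp ((ih hl).comp (isStreamLift_cubeCast _))

theorem isStreamLift_normalForm {m n b : ℕ} {ls : List ℕ} {lg ld : List (ℕ × Bool)}
    (hm : m = b + lg.length + ls.length) (hn : n = b + ld.length)
    (hs : sigmaValid ls (b + lg.length)) (hg : gammaValid lg b) (hd : deltaValid ld b) :
    IsStreamLift
      (fun x : Cube m =>
        cubeCast hn.symm (deltaWord ld (gammaWord lg (sigmaWord ls (cubeCast hm x)))))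
      ((ld.map streamFace).prod * ((lg.map streamConn).prod * (ls.map streamDegen).prod)) :=
  (isStreamLift_cubeCast hn.symm).comp <| (isStreamLift_deltaWord hd).comp <|
    (isStreamLift_gammaWord hg).comp <| (isStreamLift_sigmaWord hs).comp (isStreamLift_cubeCast hm)

theorem IsPath.deltaValid_and_eq {l : List (ℕ × Bool)} {m n : ℕ} (hl : IsPath FaceTyped l m n) :
    deltaValid l m ∧ n = m + l.length := by
  induction l generalizing n with
  | nil => exact ⟨trivial, hl.symm⟩
  | cons a l ih =>
    obtain ⟨k, ⟨rfl, hp, hpk⟩, hl⟩ := hl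
    obtain ⟨hvalid, rfl⟩ := ih hl
    exact ⟨⟨hp, hpk, hvalid⟩, rfl⟩

theorem IsPath.sigmaValid_and_eq {l : List ℕ} {m n : ℕ} (hl : IsPath DegenTyped l m n) :
    sigmaValid l n ∧ m = n + l.length := by
  induction l generalizing n with
  | nil => exact ⟨trivial, hl⟩
  | cons a l ih =>
    obtain ⟨k, ⟨rfl, hp, hpk⟩, hl⟩ := hl
    obtain ⟨hvalid, rfl⟩ := ih hl
    exact ⟨⟨hp, hpk, hvalid⟩, by grind⟩

theorem IsPath.gammaValid_and_eq {l : List (ℕ × Bool)} {m n : ℕ} (hl : IsPath ConnTyped l m n) :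
    gammaValid l n ∧ m = n + l.length := by
  induction l generalizing n with
  | nil => exact ⟨trivial, hl⟩
  | cons a l ih =>
    obtain ⟨k, ⟨rfl, hp, hpk⟩, hl⟩ := hl
    obtain ⟨hvalid, rfl⟩ := ih hl
    exact ⟨⟨hp, hpk, hvalid⟩, by grind⟩

theorem exists_isStreamLift_factors_mul {m n : ℕ} {f : Cube m → Cube n} (hf : IsBoxMap f) :
    ∃ F, IsStreamLift f F ∧ ∀ k G, Factors k m G → Factors k n (F * G) := by
  induction hf with
  | id => exact ⟨1, isStreamLift_id _, fun _ _ hG => hG⟩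
  | face i ε =>
    exact ⟨_, isStreamLift_face i ε, fun _ _ => Factors.streamFace_mul (by grind [FaceTyped])⟩
  | degen i =>
    exact ⟨_, isStreamLift_degen i, fun _ _ => Factors.streamDegen_mul (by grind [DegenTyped])⟩
  | conn i ε =>
    exact ⟨_, isStreamLift_conn i ε, fun _ _ => Factors.streamConn_mul (by grind [ConnTyped])⟩
  | comp _ _ ihf ihg =>
    obtain ⟨F, hF, hFmul⟩ := ihf
    obtain ⟨G, hG, hGmul⟩ := ihg
    exact ⟨G * F, hG.comp hF, fun k H hH => by
      simpa only [mul_assoc] using hGmul k _ (hFmul k H hH)⟩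

/-! ### Uniqueness -/

theorem streamFace_injective (a : ℕ × Bool) : Function.Injective (streamFace a) :=
  Function.LeftInverse.injective (g := streamDegen a.1)
    (congrFun (streamDegen_mul_streamFace_self a.1 a.2))

theorem streamDegen_surjective (p : ℕ) : Function.Surjective (streamDegen p) :=
  Function.RightInverse.surjective (g := streamFace (p, true))
    (congrFun (streamDegen_mul_streamFace_self p true))

theorem streamConn_surjective (a : ℕ × Bool) : Function.Surjective (streamConn a) :=
  Function.RightInverse.surjective (g := streamFace (a.1, !a.2))
    (congrFun (streamConn_mul_streamFace_cancel (.inl rfl) a.2))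

theorem prod_map_surjective {α : Type*} {gen : α → StreamEnd}
    (hgen : ∀ a, Function.Surjective (gen a)) (l : List α) :
    Function.Surjective (l.map gen).prod :=
  List.prod_induction (fun F : StreamEnd => Function.Surjective F) (fun _ _ => .comp)
    Function.surjective_id (by simpa using fun _ a _ h => h ▸ hgen a)

theorem prod_map_injective {α : Type*} {gen : α → StreamEnd}
    (hgen : ∀ a, Function.Injective (gen a)) (l : List α) :
    Function.Injective (l.map gen).prod :=
  List.prod_induction (fun F : StreamEnd => Function.Injective F) (fun _ _ => .comp)
    Function.injective_id (by simpa using fun _ a _ h => h ▸ hgen a)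

theorem eq_of_mul_surjective {F G H : StreamEnd} (hH : Function.Surjective H)
    (h : F * H = G * H) : F = G :=
  hH.injective_comp_right h

theorem mem_iff_forall_streamFace_prod_apply {l : List (ℕ × Bool)}
    (hl : l.IsChain (fun a b => b.1 < a.1)) (a : ℕ × Bool) :
    a ∈ l ↔ ∀ z, (l.map streamFace).prod z a.1 = a.2 := by
  induction l generalizing a with
  | nil =>
    obtain ⟨p, ε⟩ := a
    simpa [one_apply] using ⟨fun _ => !ε, by simp⟩
  | cons b l ih =>
    have hb : ∀ c ∈ l, c.1 < b.1 := (List.pairwise_cons.1 (List.isChain_iff_pairwise.1 hl)).1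
    have ih := ih hl.tail
    simp only [List.map_cons, List.prod_cons, mul_apply, streamFace_apply]
    obtain hlt | heq | hgt := lt_trichotomy a.1 b.1
    · simp only [if_pos hlt, ← ih a, List.mem_cons]
      grind
    · grind
    · have hnot := (ih (a.1 - 1, a.2)).not.1 fun h => by grind
      grind

theorem streamFace_prod_injective {l l' : List (ℕ × Bool)} {H H' : StreamEnd}
    (hl : l.IsChain (fun a b => b.1 < a.1)) (hl' : l'.IsChain (fun a b => b.1 < a.1))
    (hH : Function.Surjective H) (hH' : Function.Surjective H')
    (h : (l.map streamFace).prod * H = (l'.map streamFace).prod * H') : l = l' ∧ H = H' := by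
  obtain rfl : l = l' := by
    refine (List.isChain_iff_pairwise.1 hl).eq_of_mem_iff (List.isChain_iff_pairwise.1 hl') ?_
    intro a
    rw [mem_iff_forall_streamFace_prod_apply hl, mem_iff_forall_streamFace_prod_apply hl']
    have hz (z : ℕ → Bool) : (l.map streamFace).prod (H z) = (l'.map streamFace).prod (H' z) :=
      congrFun h z
    exact hH.forall.trans <| (forall_congr' fun z => by rw [hz]).trans hH'.forall.symm
  exact ⟨rfl, (prod_map_injective streamFace_injective l).comp_left h⟩

/-- The map `F` does not depend on the coordinate `p` of its argument. -/
def Ignores (F : StreamEnd) (p : ℕ) : Prop :=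
  F * streamFace (p, true) = F * streamFace (p, false)

theorem ignores_iff_eq_not {F : StreamEnd} {p : ℕ} (ε : Bool) :
    Ignores F p ↔ F * streamFace (p, ε) = F * streamFace (p, !ε) := by
  cases ε
  · exact eq_comm
  · rfl

theorem ignores_mul_iff {F A B : StreamEnd} {p q : ℕ} (hB : Function.Surjective B)
    (hA : ∀ ε, A * streamFace (p, ε) = streamFace (q, ε) * B) :
    Ignores (F * A) p ↔ Ignores F q := by
  rw [Ignores, Ignores, mul_assoc, mul_assoc, hA, hA, ← mul_assoc, ← mul_assoc]
  exact hB.injective_comp_right.eq_iff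

theorem ignores_mul_streamDegen_self (F : StreamEnd) (p : ℕ) : Ignores (F * streamDegen p) p := by
  simp only [Ignores, mul_assoc, streamDegen_mul_streamFace_self]

theorem ignores_mul_streamDegen {F : StreamEnd} {p q : ℕ} :
    Ignores (F * streamDegen p) q ↔
      q = p ∨ (q < p ∧ Ignores F q) ∨ (p < q ∧ Ignores F (q - 1)) := by
  obtain hlt | rfl | hgt := lt_trichotomy q p
  · rw [ignores_mul_iff (streamDegen_surjective (p - 1)) (streamDegen_mul_streamFace_of_gt hlt)]
    grind
  · simp [ignores_mul_streamDegen_self]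
  · rw [ignores_mul_iff (streamDegen_surjective p) (streamDegen_mul_streamFace_of_lt hgt)]
    grind

theorem not_ignores_streamConn_prod (l : List (ℕ × Bool)) (p : ℕ) :
    ¬Ignores (l.map streamConn).prod p := by
  induction l using List.reverseRecOn generalizing p with
  | nil =>
    intro h
    have := congrFun (congrFun h fun _ => true) p
    simp [mul_apply, one_apply, streamFace_apply] at this
  | append_singleton l a ih =>
    obtain ⟨q, ε⟩ := a
    simp only [List.map_append, List.map_singleton, List.prod_append, List.prod_singleton]
    intro h
    obtain hlt | hgt | hnear : p < q ∨ q + 1 < p ∨ (p = q ∨ p = q + 1) := by lia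
    · exact ih p <| (ignores_mul_iff (streamConn_surjective (q - 1, ε))
        (streamConn_mul_streamFace_of_gt hlt ε)).1 h
    · exact ih (p - 1) <| (ignores_mul_iff (streamConn_surjective (q, ε))
        (streamConn_mul_streamFace_of_lt hgt ε)).1 h
    · have hW : (l.map streamConn).prod * streamFace (q, ε) * streamDegen q =
          (l.map streamConn).prod := by
        simpa only [mul_assoc, streamConn_mul_streamFace_absorb hnear,
          streamConn_mul_streamFace_cancel hnear, mul_one] using (ignores_iff_eq_not ε).1 h
      exact ih q (hW ▸ ignores_mul_streamDegen_self _ q)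

theorem mem_iff_ignores_mul_streamDegen_prod {G : StreamEnd} (hG : ∀ p, ¬Ignores G p) {l : List ℕ}
    (hl : l.IsChain (· < ·)) (p : ℕ) : p ∈ l ↔ Ignores (G * (l.map streamDegen).prod) p := by
  induction l using List.reverseRecOn generalizing p with
  | nil => simpa using hG p
  | append_singleton l q ih =>
    have hq : ∀ c ∈ l, c < q := by
      simpa using (List.pairwise_append.1 (List.isChain_iff_pairwise.1 hl)).2.2
    simp only [List.map_append, List.map_singleton, List.prod_append, List.prod_singleton,
      ← mul_assoc, ignores_mul_streamDegen, ← ih hl.left_of_append]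
    grind

theorem streamDegen_prod_injective {l l' : List ℕ} {G G' : StreamEnd}
    (hl : l.IsChain (· < ·)) (hl' : l'.IsChain (· < ·))
    (hG : ∀ p, ¬Ignores G p) (hG' : ∀ p, ¬Ignores G' p)
    (h : G * (l.map streamDegen).prod = G' * (l'.map streamDegen).prod) : l = l' ∧ G = G' := by
  obtain rfl : l = l' :=
    (List.isChain_iff_pairwise.1 hl).eq_of_mem_iff (List.isChain_iff_pairwise.1 hl') fun p => by
      rw [mem_iff_ignores_mul_streamDegen_prod hG hl,
        mem_iff_ignores_mul_streamDegen_prod hG' hl', h]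
  exact ⟨rfl, eq_of_mul_surjective (prod_map_surjective streamDegen_surjective l) h⟩

theorem mul_streamConn_ne_one (H : StreamEnd) (a : ℕ × Bool) : H * streamConn a ≠ 1 := by
  obtain ⟨p, ε⟩ := a
  intro h
  have heq : streamFace (p, ε) = streamFace (p + 1, ε) := by
    rw [← one_mul (streamFace (p, ε)), ← one_mul (streamFace (p + 1, ε)), ← h, mul_assoc, mul_assoc,
      streamConn_mul_streamFace_absorb (.inl rfl), streamConn_mul_streamFace_absorb (.inr rfl)]
  have := congrFun (congrFun heq fun _ => !ε) (p + 1)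
  simp [streamFace_apply] at this

theorem mul_streamConn_not_ne_prod_mul (l : List (ℕ × Bool)) (H : StreamEnd) {p q : ℕ}
    (hp : p = q ∨ p = q + 1) (ε : Bool) :
    H * streamConn (p, !ε) ≠ (l.map streamConn).prod * streamConn (q, ε) := by
  intro h
  have hW : H * streamFace (p, !ε) * streamDegen p = (l.map streamConn).prod := by
    rw [mul_assoc, ← streamConn_mul_streamFace_absorb (.inl rfl), ← mul_assoc, h, mul_assoc,
      streamConn_mul_streamFace_cancel hp, mul_one]
  exact not_ignores_streamConn_prod l p (hW ▸ ignores_mul_streamDegen_self _ p)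

theorem lt_or_eq_of_mul_streamConn_eq {l : List (ℕ × Bool)} {a b : ℕ × Bool} {H : StreamEnd}
    (hl : (l ++ [b]).IsChain ConnPrecedes)
    (h : H * streamConn a = (l.map streamConn).prod * streamConn b) : a.1 < b.1 ∨ a = b := by
  obtain ⟨p, ε⟩ := a
  obtain ⟨q, δ⟩ := b
  obtain hlt | rfl | hgt := lt_trichotomy p q
  · exact .inl hlt
  · obtain rfl | rfl := Bool.eq_or_eq_not ε δ
    · exact .inr rfl
    · exact absurd h (mul_streamConn_not_ne_prod_mul l H (.inl rfl) δ)
  -- Composing with the face `∂_{q,¬δ}` cancels `b` and lowers the index of `a`, so that `a` gets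
  -- compared with the last letter of `l`.
  have hW : H * streamFace (q, !δ) * streamConn (p - 1, ε) = (l.map streamConn).prod := by
    rw [mul_assoc, ← streamConn_mul_streamFace_of_gt hgt, ← mul_assoc, h, mul_assoc,
      streamConn_mul_streamFace_cancel (.inl rfl), mul_one]
  obtain rfl | ⟨l, c, rfl⟩ := l.eq_nil_or_concat'
  · exact absurd hW (mul_streamConn_ne_one _ _)
  have hcb : ConnPrecedes c (q, δ) := by
    rw [List.append_assoc] at hl
    exact (List.isChain_append_cons_cons.1 hl).2.1
  have hc := lt_or_eq_of_mul_streamConn_eq hl.left_of_append (hW.trans (by simp))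
  obtain ⟨rfl, hne⟩ : p = q + 1 ∧ ε ≠ δ := by grind [ConnPrecedes]
  obtain rfl := Bool.eq_not.2 hne
  exact absurd h (mul_streamConn_not_ne_prod_mul _ H (.inr rfl) δ)
termination_by l.length

theorem streamConn_prod_injective {l l' : List (ℕ × Bool)} (hl : l.IsChain ConnPrecedes)
    (hl' : l'.IsChain ConnPrecedes) (h : (l.map streamConn).prod = (l'.map streamConn).prod) :
    l = l' := by
  induction l using List.reverseRecOn generalizing l' with
  | nil =>
    obtain rfl | ⟨l', b, rfl⟩ := l'.eq_nil_or_concat'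
    · rfl
    · exact absurd (by simpa using h.symm) (mul_streamConn_ne_one (l'.map streamConn).prod b)
  | append_singleton l a ih =>
    obtain rfl | ⟨l', b, rfl⟩ := l'.eq_nil_or_concat'
    · exact absurd (by simpa using h) (mul_streamConn_ne_one (l.map streamConn).prod a)
    simp only [List.map_append, List.map_singleton, List.prod_append, List.prod_singleton] at h
    obtain rfl : a = b := by
      have := lt_or_eq_of_mul_streamConn_eq hl' h
      have := lt_or_eq_of_mul_streamConn_eq hl h.symm
      grind
    rw [ih hl.left_of_append hl'.left_of_append
      (eq_of_mul_surjective (streamConn_surjective a) h)]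

theorem normalForm_unique {ls ls' : List ℕ} {lg lg' ld ld' : List (ℕ × Bool)}
    (hs : ls.IsChain (· < ·)) (hs' : ls'.IsChain (· < ·)) (hg : lg.IsChain ConnPrecedes)
    (hg' : lg'.IsChain ConnPrecedes) (hd : ld.IsChain (fun a b => b.1 < a.1))
    (hd' : ld'.IsChain (fun a b => b.1 < a.1))
    (h : (ld.map streamFace).prod * ((lg.map streamConn).prod * (ls.map streamDegen).prod) =
      (ld'.map streamFace).prod * ((lg'.map streamConn).prod * (ls'.map streamDegen).prod)) :
    ls = ls' ∧ lg = lg' ∧ ld = ld' := by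
  have hepi (lg : List (ℕ × Bool)) (ls : List ℕ) :
      Function.Surjective ((lg.map streamConn).prod * (ls.map streamDegen).prod) :=
    (prod_map_surjective streamConn_surjective lg).comp
      (prod_map_surjective streamDegen_surjective ls)
  obtain ⟨hld, h⟩ := streamFace_prod_injective hd hd' (hepi lg ls) (hepi lg' ls') h
  obtain ⟨hls, h⟩ := streamDegen_prod_injective hs hs' (not_ignores_streamConn_prod lg)
    (not_ignores_streamConn_prod lg') h
  exact ⟨hls, streamConn_prod_injective hg hg' h, hld⟩

theorem Factors.exists_normalForm {m n : ℕ} {F : StreamEnd} (hF : Factors m n F) :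
    ∃ (ls : List ℕ) (lg ld : List (ℕ × Bool)) (b : ℕ),
      ls.IsChain (· < ·) ∧ lg.IsChain ConnPrecedes ∧ ld.IsChain (fun a b => b.1 < a.1) ∧
      sigmaValid ls (b + lg.length) ∧ gammaValid lg b ∧ deltaValid ld b ∧
      m = b + lg.length + ls.length ∧ n = b + ld.length ∧
      F = (ld.map streamFace).prod * ((lg.map streamConn).prod * (ls.map streamDegen).prod) := by
  obtain ⟨b, ld₀, _, hld₀, ⟨k, lg₀, ls₀, hlg₀, hls₀, rfl⟩, rfl⟩ := hF
  obtain ⟨ld, hd, hld, hld_prod⟩ := isExchange_streamFace.exists_isChain hld₀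
  obtain ⟨lg, hg, hlg, hlg_prod⟩ := isExchange_streamConn.exists_isChain hlg₀
  obtain ⟨ls, hs, hls, hls_prod⟩ := isExchange_streamDegen.exists_isChain hls₀
  obtain ⟨hd_valid, rfl⟩ := hld.deltaValid_and_eq
  obtain ⟨hg_valid, rfl⟩ := hlg.gammaValid_and_eq
  obtain ⟨hs_valid, rfl⟩ := hls.sigmaValid_and_eq
  exact ⟨ls, lg, ld, b, hs, hg, hd, hs_valid, hg_valid, hd_valid, rfl, rfl,
    by rw [hld_prod, hlg_prod, hls_prod]⟩

theorem isChain_connPrecedes_iff {l : List (ℕ × Bool)} :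
    l.IsChain ConnPrecedes ↔
      (l.map Prod.fst).IsChain (· ≤ ·) ∧ l.IsChain (fun a b => a.1 = b.1 → a.2 ≠ b.2) := by
  rw [List.isChain_map]
  induction l using List.twoStepInduction with
  | nil => simp
  | singleton a => simp
  | cons_cons a b l _ ih =>
    simp only [List.isChain_cons_cons, ih, ConnPrecedes]
    tauto

end BoxNormalForm

open BoxNormalForm

/-- **Normal form for morphisms of the box category** (Grandis–Mauri).
Every morphism of `□` factors as `(∂_{k_1,ε_1} ⋯ ∂_{k_t,ε_t}) ∘ (γ_{j_1,δ_1} ⋯ γ_{j_s,δ_s}) ∘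
(σ_{i_1} ⋯ σ_{i_r})` with `1 ≤ i_1 < ⋯ < i_r`, `1 ≤ j_1 ≤ ⋯ ≤ j_s` and `k_1 > ⋯ > k_t ≥ 1`
(1-based indices), and this factorization is unique under the additional condition that
`δ_p ≠ δ_{p+1}` whenever `j_p = j_{p+1}`. -/
theorem box_normal_form {m n : ℕ} (f : Cube m → Cube n) (hf : IsBoxMap f) :
    ∃ (ls : List ℕ) (lg : List (ℕ × Bool)) (ld : List (ℕ × Bool)) (b : ℕ)
      (h1 : m = (b + lg.length) + ls.length) (h2 : n = b + ld.length),
      sigmaValid ls (b + lg.length) ∧ ls.Chain' (· < ·) ∧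
      gammaValid lg b ∧ (lg.map Prod.fst).Chain' (· ≤ ·) ∧
      lg.Chain' (fun a b => a.1 = b.1 → a.2 ≠ b.2) ∧
      deltaValid ld b ∧ (ld.map Prod.fst).Chain' (· > ·) ∧
      (∀ x : Cube m,
        f x = cubeCast h2.symm (deltaWord ld (gammaWord lg (sigmaWord ls (cubeCast h1 x))))) ∧
      (∀ (ls' : List ℕ) (lg' ld' : List (ℕ × Bool)) (b' : ℕ)
        (h1' : m = (b' + lg'.length) + ls'.length) (h2' : n = b' + ld'.length),
        sigmaValid ls' (b' + lg'.length) → ls'.Chain' (· < ·) →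
        gammaValid lg' b' → (lg'.map Prod.fst).Chain' (· ≤ ·) →
        lg'.Chain' (fun a b => a.1 = b.1 → a.2 ≠ b.2) →
        deltaValid ld' b' → (ld'.map Prod.fst).Chain' (· > ·) →
        (∀ x : Cube m,
          f x = cubeCast h2'.symm
            (deltaWord ld' (gammaWord lg' (sigmaWord ls' (cubeCast h1' x))))) →
        ls = ls' ∧ lg = lg' ∧ ld = ld') := by
  obtain ⟨F, hF, hmul⟩ := exists_isStreamLift_factors_mul hf
  obtain ⟨ls, lg, ld, b, hs, hg, hd, hs_valid, hg_valid, hd_valid, hm, hn, hprod⟩ :=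
    (hmul m 1 (Factors.one m)).exists_normalForm
  rw [mul_one] at hprod
  obtain ⟨hg_le, hg_ne⟩ := isChain_connPrecedes_iff.1 hg
  have hlift := isStreamLift_normalForm hm hn hs_valid hg_valid hd_valid
  rw [← hprod] at hlift
  refine ⟨ls, lg, ld, b, hm, hn, hs_valid, hs, hg_valid, hg_le, hg_ne, hd_valid,
    (List.isChain_map _).2 hd, congrFun (hF.cube_unique hlift), ?_⟩
  intro ls' lg' ld' b' hm' hn' hs_valid' hs' hg_valid' hg_le' hg_ne' hd_valid' hd' heq
  have hlift' := isStreamLift_normalForm hm' hn' hs_valid' hg_valid' hd_valid'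
  rw [← funext heq] at hlift'
  exact normalForm_unique hs hs' hg (isChain_connPrecedes_iff.2 ⟨hg_le', hg_ne'⟩) hd
    ((List.isChain_map _).1 hd') (hprod.symm.trans (hF.stream_unique hlift'))
end

section
/- The box category □ is a Reedy category with degree function deg([1]^n) = n, with □₋ generated by degeneracies and connections and □₊ generated by face maps; moreover it satisfies the Eilenberg–Zilber property: every morphism in □₋ is a split epimorphism and is determined by its set of sections. -/
/-- The predicate of being a composite of finitely many face maps in the box category. -/
inductive IsFaceComposite : {m n : ℕ} → (Cube m → Cube n) → Prop
  | id {n : ℕ} : IsFaceComposite (fun x : Cube n => x)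
  | face {n : ℕ} (i : Fin (n + 1)) (ε : Bool) : IsFaceComposite (face i ε)
  | comp {m n k : ℕ} {f : Cube m → Cube n} {g : Cube n → Cube k} :
      IsFaceComposite f → IsFaceComposite g → IsFaceComposite (g ∘ f)

/-- The predicate of being a composite of degeneracies and connections,
i.e. a morphism of the degree-lowering part `□₋` of the box category. -/
inductive IsMinus : {m n : ℕ} → (Cube m → Cube n) → Prop
  | id {n : ℕ} : IsMinus (fun x : Cube n => x)
  | degen {n : ℕ} (i : Fin (n + 1)) : IsMinus (degen i)
  | conn {n : ℕ} (i : Fin (n + 1)) (ε : Bool) : IsMinus (conn i ε)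
  | comp {m n k : ℕ} {f : Cube m → Cube n} {g : Cube n → Cube k} :
      IsMinus f → IsMinus g → IsMinus (g ∘ f)

/-!
Moving a degeneracy or a connection past a face map leaves a composite of at most one face map
after at most one degeneracy or connection, so every box map factors as a map of `□₋` followed by
one of `□₊`. Two factorizations of the same map differ by a box map between the middle objects,
obtained from a section of one of the `□₋` parts; it is injective because face composites are, so
the middle dimensions agree, and an injective box map of a cube to itself has a `□₋` part that
preserves the dimension, hence is the identity.

For the Eilenberg–Zilber property, consider the edges of `[1]^m` that some output coordinate of a
box map `f` detects. Each input of `f` influences at most one output, and the order of the outputs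
is that of the inputs. If `f` is surjective, every detected edge can therefore be completed to a
face of `[1]^m` on which `f` restricts to the identity, that is, to a section of `f` in `□₊`. So if
these sections of `f` are sections of `g`, every edge detected by `f` is detected by `g`, and
`f = g` follows by monotonicity: an `x` with `f x j = 1` lies above a detected edge, an `x` with
`f x j = 0` below one.
-/

open Function

variable {l m n : ℕ}

/-! ### Cubical identities -/

@[ext]
theorem Cube.ext {x y : Cube n} (h : ∀ i, x i = y i) : x = y :=
  funext h

theorem face_apply_self (i : Fin (n + 1)) (ε : Bool) (x : Cube n) : face i ε x i = ε :=
  Fin.insertNth_apply_same (α := fun _ => Bool) i ε x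

theorem face_apply_succAbove (i : Fin (n + 1)) (ε : Bool) (x : Cube n) (k : Fin n) :
    face i ε x (i.succAbove k) = x k :=
  Fin.insertNth_apply_succAbove (α := fun _ => Bool) i ε x k

theorem degen_comp_face_self (i : Fin (n + 1)) (ε : Bool) : degen i ∘ face i ε = id := by
  ext x k
  exact face_apply_succAbove i ε x k

theorem degen_succAbove_comp_face (i : Fin (n + 1)) (j : Fin (n + 2)) (ε : Bool) :
    degen (j.succAbove i) ∘ face j ε = face (i.predAbove j) ε ∘ degen i := by
  ext x k
  simp only [comp_apply, degen]
  obtain rfl | ⟨k, rfl⟩ := Fin.eq_self_or_eq_succAbove (i.predAbove j) k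
  · rw [Fin.succAbove_succAbove_predAbove, face_apply_self, face_apply_self]
  · rw [Fin.succAbove_succAbove_succAbove_predAbove]
    simp only [face_apply_succAbove, degen]

theorem face_apply (i : Fin (n + 1)) (ε : Bool) (x : Cube n) (k : Fin (n + 1)) :
    face i ε x k = if h : k.val < i.val then x ⟨k.val, by lia⟩
      else if h' : k.val = i.val then ε else x ⟨k.val - 1, by lia⟩ := by
  obtain rfl | ⟨k, rfl⟩ := Fin.eq_self_or_eq_succAbove i k
  · simp [face_apply_self]
  · rw [face_apply_succAbove]
    grind [Fin.succAbove]

theorem degen_apply (i : Fin (n + 1)) (x : Cube (n + 1)) (k : Fin n) :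
    degen i x k = if k.val < i.val then x ⟨k.val, by lia⟩ else x ⟨k.val + 1, by lia⟩ := by
  rw [degen, Fin.succAbove]
  grind

theorem conn_apply (i : Fin (n + 1)) (ε : Bool) (x : Cube (n + 2)) (k : Fin (n + 1)) :
    conn i ε x k = if k.val < i.val then x ⟨k.val, by lia⟩
      else if k.val = i.val then
        (if ε then x ⟨i.val, by lia⟩ || x ⟨i.val + 1, by lia⟩
          else x ⟨i.val, by lia⟩ && x ⟨i.val + 1, by lia⟩)
      else x ⟨k.val + 1, by lia⟩ :=
  rfl

theorem conn_comp_face_of_le {i : Fin (n + 2)} {j : Fin (n + 1)} (h : i ≤ j.castSucc)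
    (ε δ : Bool) : conn j.succ δ ∘ face i.castSucc ε = face i ε ∘ conn j δ := by
  ext x k
  simp only [comp_apply, conn_apply, face_apply, Fin.val_succ, Fin.val_castSucc]
  grind

theorem conn_comp_face_of_lt {i : Fin (n + 2)} {j : Fin (n + 1)} (h : j.castSucc < i)
    (ε δ : Bool) : conn j.castSucc δ ∘ face i.succ ε = face i ε ∘ conn j δ := by
  ext x k
  simp only [comp_apply, conn_apply, face_apply, Fin.val_succ, Fin.val_castSucc]
  grind

theorem conn_comp_face_castSucc_not (i : Fin (n + 1)) (ε : Bool) :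
    conn i ε ∘ face i.castSucc (!ε) = id := by
  ext x k
  simp only [comp_apply, conn_apply, face_apply, Fin.val_castSucc, id_eq]
  cases ε <;> grind

theorem conn_comp_face_succ_not (i : Fin (n + 1)) (ε : Bool) :
    conn i ε ∘ face i.succ (!ε) = id := by
  ext x k
  simp only [comp_apply, conn_apply, face_apply, Fin.val_succ, id_eq]
  cases ε <;> grind

theorem conn_comp_face_castSucc (i : Fin (n + 1)) (ε : Bool) :
    conn i ε ∘ face i.castSucc ε = face i ε ∘ degen i := by
  ext x k
  simp only [comp_apply, conn_apply, face_apply, degen_apply, Fin.val_castSucc]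
  cases ε <;> grind

theorem conn_comp_face_succ (i : Fin (n + 1)) (ε : Bool) :
    conn i ε ∘ face i.succ ε = face i ε ∘ degen i := by
  ext x k
  simp only [comp_apply, conn_apply, face_apply, degen_apply, Fin.val_succ]
  cases ε <;> grind

/-! ### Factorization -/

theorem IsFaceComposite.isBoxMap {f : Cube m → Cube n} (hf : IsFaceComposite f) :
    IsBoxMap f := by
  induction hf with
  | id => exact .id
  | face i ε => exact .face i ε
  | comp _ _ ihf ihg => exact .comp ihf ihg

theorem IsMinus.isBoxMap {f : Cube m → Cube n} (hf : IsMinus f) : IsBoxMap f := by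
  induction hf with
  | id => exact .id
  | degen i => exact .degen i
  | conn i ε => exact .conn i ε
  | comp _ _ ihf ihg => exact .comp ihf ihg

/-- The composites of at most one face map. Moving a map of `□₋` past such a map yields a map of
the same kind, which is what makes the exchange with arbitrary face composites an induction. -/
inductive IsFaceOrId : {m n : ℕ} → (Cube m → Cube n) → Prop
  | id {n : ℕ} : IsFaceOrId (fun x : Cube n => x)
  | face {n : ℕ} (i : Fin (n + 1)) (ε : Bool) : IsFaceOrId (face i ε)

theorem IsFaceOrId.isFaceComposite {f : Cube m → Cube n} (hf : IsFaceOrId f) :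
    IsFaceComposite f := by
  cases hf with
  | id => exact .id
  | face i ε => exact .face i ε

theorem IsFaceOrId.exists_degen_comp_eq {d : Cube l → Cube (n + 1)} (hd : IsFaceOrId d)
    (i : Fin (n + 1)) :
    ∃ (k : ℕ) (g : Cube l → Cube k) (h : Cube k → Cube n),
      IsMinus g ∧ IsFaceOrId h ∧ degen i ∘ d = h ∘ g := by
  cases hd with
  | id => exact ⟨_, _, _, .degen i, .id, rfl⟩
  | face j ε =>
    obtain rfl | ⟨i, rfl⟩ := Fin.eq_self_or_eq_succAbove j i
    · exact ⟨_, _, _, .id, .id, degen_comp_face_self i ε⟩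
    · cases l with
      | zero => exact i.elim0
      | succ l => exact ⟨_, _, _, .degen _, .face _ _, degen_succAbove_comp_face i j ε⟩

theorem exists_conn_comp_face_eq (i : Fin (n + 1)) (j : Fin (n + 2)) (ε δ : Bool) :
    ∃ (k : ℕ) (g : Cube (n + 1) → Cube k) (h : Cube k → Cube (n + 1)),
      IsMinus g ∧ IsFaceOrId h ∧ conn i δ ∘ face j ε = h ∘ g := by
  obtain h | h | rfl | rfl : j < i.castSucc ∨ i.succ < j ∨ j = i.castSucc ∨ j = i.succ := by
    grind
  · cases n with
    | zero => grind
    | succ n =>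
      obtain ⟨i, rfl⟩ := Fin.exists_succ_eq.2 (show i ≠ 0 by grind)
      obtain ⟨j, rfl⟩ := Fin.exists_castSucc_eq.2 (show j ≠ Fin.last _ by grind)
      exact ⟨_, _, _, .conn i δ, .face j ε, conn_comp_face_of_le (by grind) ε δ⟩
  · cases n with
    | zero => grind
    | succ n =>
      obtain ⟨i, rfl⟩ := Fin.exists_castSucc_eq.2 (show i ≠ Fin.last _ by grind)
      obtain ⟨j, rfl⟩ := Fin.exists_succ_eq.2 (show j ≠ 0 by grind)
      exact ⟨_, _, _, .conn i δ, .face j ε, conn_comp_face_of_lt (by grind) ε δ⟩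
  · obtain rfl | rfl := Bool.eq_or_eq_not ε δ
    · exact ⟨_, _, _, .degen _, .face _ _, conn_comp_face_castSucc i ε⟩
    · exact ⟨_, id, id, .id, .id, conn_comp_face_castSucc_not i δ⟩
  · obtain rfl | rfl := Bool.eq_or_eq_not ε δ
    · exact ⟨_, _, _, .degen _, .face _ _, conn_comp_face_succ i ε⟩
    · exact ⟨_, id, id, .id, .id, conn_comp_face_succ_not i δ⟩

theorem IsFaceOrId.exists_conn_comp_eq {d : Cube l → Cube (n + 2)} (hd : IsFaceOrId d)
    (i : Fin (n + 1)) (δ : Bool) :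
    ∃ (k : ℕ) (g : Cube l → Cube k) (h : Cube k → Cube (n + 1)),
      IsMinus g ∧ IsFaceOrId h ∧ conn i δ ∘ d = h ∘ g := by
  cases hd with
  | id => exact ⟨_, _, _, .conn i δ, .id, rfl⟩
  | face j ε => exact exists_conn_comp_face_eq i j ε δ

theorem IsMinus.exists_comp_isFaceOrId_eq {g : Cube m → Cube n} (hg : IsMinus g)
    {d : Cube l → Cube m} (hd : IsFaceOrId d) :
    ∃ (k : ℕ) (g' : Cube l → Cube k) (h : Cube k → Cube n),
      IsMinus g' ∧ IsFaceOrId h ∧ g ∘ d = h ∘ g' := by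
  induction hg generalizing l with
  | id => exact ⟨_, _, _, .id, hd, rfl⟩
  | degen i => exact hd.exists_degen_comp_eq i
  | conn i ε => exact hd.exists_conn_comp_eq i ε
  | comp _ _ ih₁ ih₂ =>
    obtain ⟨_, g₁, d₁, hg₁, hd₁, h₁⟩ := ih₁ hd
    obtain ⟨_, g₂, d₂, hg₂, hd₂, h₂⟩ := ih₂ hd₁
    exact ⟨_, g₂ ∘ g₁, d₂, .comp hg₁ hg₂, hd₂, by rw [comp_assoc, h₁, ← comp_assoc, h₂, comp_assoc]⟩

theorem IsFaceComposite.exists_minus_comp_eq {d : Cube l → Cube m} (hd : IsFaceComposite d)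
    {g : Cube m → Cube n} (hg : IsMinus g) :
    ∃ (k : ℕ) (g' : Cube l → Cube k) (h : Cube k → Cube n),
      IsMinus g' ∧ IsFaceComposite h ∧ g ∘ d = h ∘ g' := by
  induction hd generalizing n with
  | id => exact ⟨_, _, _, hg, .id, rfl⟩
  | face i ε =>
    obtain ⟨_, g', h, hg', hh, e⟩ := hg.exists_comp_isFaceOrId_eq (.face i ε)
    exact ⟨_, g', h, hg', hh.isFaceComposite, e⟩
  | comp _ _ ih₁ ih₂ =>
    obtain ⟨_, g₂, d₂, hg₂, hd₂, h₂⟩ := ih₂ hg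
    obtain ⟨_, g₁, d₁, hg₁, hd₁, h₁⟩ := ih₁ hg₂
    exact ⟨_, g₁, d₂ ∘ d₁, hg₁, .comp hd₁ hd₂, by rw [← comp_assoc, h₂, comp_assoc, h₁, comp_assoc]⟩

theorem IsBoxMap.exists_factorization {f : Cube m → Cube n} (hf : IsBoxMap f) :
    ∃ (k : ℕ) (g : Cube m → Cube k) (h : Cube k → Cube n),
      IsMinus g ∧ IsFaceComposite h ∧ f = h ∘ g := by
  induction hf with
  | id => exact ⟨_, _, _, .id, .id, rfl⟩
  | face i ε => exact ⟨_, _, _, .id, .face i ε, rfl⟩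
  | degen i => exact ⟨_, _, _, .degen i, .id, rfl⟩
  | conn i ε => exact ⟨_, _, _, .conn i ε, .id, rfl⟩
  | comp _ _ ih₁ ih₂ =>
    obtain ⟨_, g₁, h₁, hg₁, hh₁, rfl⟩ := ih₁
    obtain ⟨_, g₂, h₂, hg₂, hh₂, rfl⟩ := ih₂
    obtain ⟨_, g, h, hg, hh, e⟩ := hh₁.exists_minus_comp_eq hg₂
    exact ⟨_, g ∘ g₁, h₂ ∘ h, .comp hg₁ hg, .comp hh hh₂,
      by rw [comp_assoc, ← comp_assoc g₂, e]; rfl⟩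

theorem IsMinus.le {f : Cube m → Cube n} (hf : IsMinus f) : n ≤ m := by
  induction hf with
  | id => exact le_rfl
  | degen | conn => exact Nat.le_succ _
  | comp _ _ ih₁ ih₂ => exact ih₂.trans ih₁

theorem IsMinus.apply_eq_of_eq {f : Cube m → Cube n} (hf : IsMinus f) (h : m = n) (x : Cube m)
    (j : Fin n) : f x j = x (Fin.cast h.symm j) := by
  induction hf with
  | id => rfl
  | degen | conn => lia
  | @comp a b c f g hf hg ihf ihg =>
    obtain rfl : a = c := h
    obtain rfl : a = b := hg.le.antisymm hf.le
    exact (ihg rfl (f x) j).trans (ihf rfl x j)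

theorem IsFaceComposite.le {f : Cube m → Cube n} (hf : IsFaceComposite f) : m ≤ n := by
  induction hf with
  | id => exact le_rfl
  | face => exact Nat.le_succ _
  | comp _ _ ih₁ ih₂ => exact ih₁.trans ih₂

theorem IsFaceComposite.apply_eq_of_eq {f : Cube m → Cube n} (hf : IsFaceComposite f) (h : m = n)
    (x : Cube m) (j : Fin n) : f x j = x (Fin.cast h.symm j) := by
  induction hf with
  | id => rfl
  | face => lia
  | @comp a b c f g hf hg ihf ihg =>
    obtain rfl : a = c := h
    obtain rfl : a = b := hf.le.antisymm hg.le
    exact (ihg rfl (f x) j).trans (ihf rfl x j)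

theorem IsMinus.eq_id {f : Cube n → Cube n} (hf : IsMinus f) : f = _root_.id := by
  ext x j
  exact hf.apply_eq_of_eq rfl x j

theorem IsFaceComposite.eq_id {f : Cube n → Cube n} (hf : IsFaceComposite f) : f = _root_.id := by
  ext x j
  exact hf.apply_eq_of_eq rfl x j

theorem Cube.le_of_injective {f : Cube m → Cube n} (hf : Injective f) : m ≤ n := by
  have hcard := Fintype.card_le_of_injective (α := Fin m → Bool) (β := Fin n → Bool) f hf
  simpa [Nat.pow_le_pow_iff_right] using hcard

theorem IsBoxMap.eq_id_of_injective {f : Cube n → Cube n} (hf : IsBoxMap f)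
    (hinj : Injective f) : f = _root_.id := by
  obtain ⟨k, g, h, hg, hh, rfl⟩ := hf.exists_factorization
  obtain rfl : k = n := hg.le.antisymm (Cube.le_of_injective hinj.of_comp)
  rw [hg.eq_id, hh.eq_id, comp_id]

theorem IsFaceComposite.injective {f : Cube m → Cube n} (hf : IsFaceComposite f) :
    Injective f := by
  induction hf with
  | id => exact injective_id
  | face i ε => exact LeftInverse.injective (congrFun (degen_comp_face_self i ε))
  | comp _ _ ih₁ ih₂ => exact ih₂.comp ih₁

theorem IsMinus.exists_section {f : Cube m → Cube n} (hf : IsMinus f) :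
    ∃ s : Cube n → Cube m, IsFaceComposite s ∧ f ∘ s = _root_.id := by
  induction hf with
  | id => exact ⟨_, .id, rfl⟩
  | degen i => exact ⟨_, .face i false, degen_comp_face_self i false⟩
  | conn i ε => exact ⟨_, .face i.castSucc (!ε), conn_comp_face_castSucc_not i ε⟩
  | @comp _ _ _ f g _ _ ih₁ ih₂ =>
    obtain ⟨s₁, hs₁, e₁⟩ := ih₁
    obtain ⟨s₂, hs₂, e₂⟩ := ih₂
    exact ⟨s₁ ∘ s₂, .comp hs₂ hs₁, by rw [comp_assoc, ← comp_assoc f, e₁, id_comp, e₂]⟩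

theorem IsMinus.surjective {f : Cube m → Cube n} (hf : IsMinus f) : Surjective f :=
  have ⟨_, _, e⟩ := hf.exists_section
  RightInverse.surjective (congrFun e)

theorem exists_isBoxMap_comp_eq {k k' : ℕ} {g : Cube m → Cube k} {h : Cube k → Cube n}
    {g' : Cube m → Cube k'} {h' : Cube k' → Cube n} (hg : IsMinus g) (hg' : IsMinus g')
    (e : h ∘ g = h' ∘ g') : ∃ v : Cube k → Cube k', IsBoxMap v ∧ h' ∘ v = h := by
  obtain ⟨s, hs, hgs⟩ := hg.exists_section
  exact ⟨g' ∘ s, .comp hs.isBoxMap hg'.isBoxMap,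
    by rw [← comp_assoc, ← e, comp_assoc, hgs, comp_id]⟩

theorem factorization_unique {k k' : ℕ} {g : Cube m → Cube k} {h : Cube k → Cube n}
    {g' : Cube m → Cube k'} {h' : Cube k' → Cube n} (hg : IsMinus g) (hh : IsFaceComposite h)
    (hg' : IsMinus g') (hh' : IsFaceComposite h') (e : h ∘ g = h' ∘ g') :
    k = k' ∧ HEq g g' ∧ HEq h h' := by
  obtain ⟨v, hv, rfl⟩ := exists_isBoxMap_comp_eq hg hg' e
  obtain ⟨v', -, hv'⟩ := exists_isBoxMap_comp_eq hg' hg e.symm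
  have hv_inj : Injective v := hh.injective.of_comp
  have hv'_inj : Injective v' := Injective.of_comp (f := h' ∘ v) (by rw [hv']; exact hh'.injective)
  obtain rfl : k = k' :=
    (Cube.le_of_injective hv_inj).antisymm (Cube.le_of_injective hv'_inj)
  obtain rfl : v = id := hv.eq_id_of_injective hv_inj
  exact ⟨rfl, heq_of_eq (hh'.injective.comp_left e), HEq.rfl⟩

/-! ### Influence of input coordinates on output coordinates -/

instance : PartialOrder (Cube n) := inferInstanceAs (PartialOrder (Fin n → Bool))

instance : BoundedOrder (Cube n) := inferInstanceAs (BoundedOrder (Fin n → Bool))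

theorem face_monotone (i : Fin (n + 1)) (ε : Bool) : Monotone (face (n := n) i ε) := by
  intro x y h k
  obtain rfl | ⟨k, rfl⟩ := Fin.eq_self_or_eq_succAbove i k
  · rw [face_apply_self, face_apply_self]
  · rw [face_apply_succAbove, face_apply_succAbove]
    exact h k

theorem conn_monotone (i : Fin (n + 1)) (ε : Bool) : Monotone (conn (n := n) i ε) := by
  intro x y h k
  unfold conn
  split_ifs
  · exact h _
  · exact sup_le_sup (h _) (h _)
  · exact inf_le_inf (h _) (h _)
  · exact h _

theorem IsBoxMap.monotone {f : Cube m → Cube n} (hf : IsBoxMap f) : Monotone f := by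
  induction hf with
  | id => exact monotone_id
  | face i ε => exact face_monotone i ε
  | degen i => exact fun _ _ h k => h (i.succAbove k)
  | conn i ε => exact conn_monotone i ε
  | comp _ _ ihf ihg => exact ihg.comp ihf

/-- The vertex obtained from `x` by overwriting its `i`-th coordinate with `b`. This is
`Function.update`, retyped as an operation on `Cube n`. -/
def Cube.update (x : Cube n) (i : Fin n) (b : Bool) : Cube n :=
  Function.update x i b

theorem Cube.update_apply (x : Cube n) (i : Fin n) (b : Bool) (k : Fin n) :
    x.update i b k = if k = i then b else x k :=
  Function.update_apply x i b k

theorem Cube.update_self (x : Cube n) (i : Fin n) (b : Bool) : x.update i b i = b :=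
  Function.update_self (β := fun _ => Bool) i b x

theorem Cube.update_of_ne {i k : Fin n} (h : k ≠ i) (x : Cube n) (b : Bool) :
    x.update i b k = x k :=
  Function.update_of_ne (β := fun _ => Bool) h b x

theorem Cube.update_eq_self (x : Cube n) (i : Fin n) : x.update i (x i) = x :=
  Function.update_eq_self i x

theorem Cube.update_monotone (x : Cube n) (i : Fin n) : Monotone (x.update i) :=
  Function.update_mono (π := fun _ => Bool)

theorem Cube.eq_of_update_apply_eq {x : Cube n} {i k : Fin n} (h : ∀ b, x.update i b k = b) :
    k = i := by
  by_contra hne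
  simpa [update_of_ne hne] using h (!x k)

/-- The `i`-th edge through `w` is mapped by the `j`-th coordinate of `f` isomorphically onto
`[1]`. -/
def IsPivotal (f : Cube m → Cube n) (w : Cube m) (i : Fin m) (j : Fin n) : Prop :=
  ∀ b, f (w.update i b) j = b

/-- The `i`-th input of `f` influences its `j`-th output; for monotone `f`, this says exactly that
the `j`-th coordinate of `f` depends on the `i`-th coordinate of its argument. -/
def Influences (f : Cube m → Cube n) (i : Fin m) (j : Fin n) : Prop :=
  ∃ w, IsPivotal f w i j

theorem IsPivotal.of_apply_update_ne {f : Cube m → Cube n} (hf : Monotone f) {w : Cube m}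
    {i : Fin m} {j : Fin n} {b : Bool} (h : f (w.update i b) j ≠ f w j) : IsPivotal f w i j := by
  have hne : f (w.update i false) j ≠ f (w.update i true) j := by
    have hw := w.update_eq_self i
    cases hwi : w i <;> rw [hwi] at hw <;> cases b <;> grind
  have hle : f (w.update i false) j ≤ f (w.update i true) j :=
    hf (w.update_monotone i (Bool.false_le _)) j
  obtain ⟨h₀, h₁⟩ := Bool.lt_iff.1 (hle.lt_of_ne hne)
  exact Bool.forall_bool.2 ⟨h₀, h₁⟩

theorem exists_apply_update_ne {ι β : Type*} {α : ι → Type*} [Finite ι] [DecidableEq ι]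
    {φ : (∀ i, α i) → β} {x y : ∀ i, α i} (h : φ x ≠ φ y) :
    ∃ w i, (∀ k, w k = x k ∨ w k = y k) ∧ w i = x i ∧ φ (update w i (y i)) ≠ φ w := by
  have := Fintype.ofFinite ι
  by_contra! hupdate
  have hpiecewise : ∀ s : Finset ι, φ (s.piecewise y x) = φ x := fun s => by
    induction s using Finset.induction_on with
    | empty => rw [Finset.piecewise_empty]
    | insert i s hi ih =>
      rw [Finset.piecewise_insert, hupdate, ih]
      · exact fun k => s.piecewise_cases y x (fun a => a = x k ∨ a = y k) (.inr rfl) (.inl rfl)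
      · exact Finset.piecewise_eq_of_notMem s y x hi
  exact h (by simpa using (hpiecewise .univ).symm)

theorem exists_isPivotal_of_apply_ne {f : Cube m → Cube n} (hf : Monotone f) {x y : Cube m}
    {j : Fin n} (h : f x j ≠ f y j) :
    ∃ w i, IsPivotal f w i j ∧ x i ≠ y i ∧ ∀ k, w k = x k ∨ w k = y k := by
  obtain ⟨w, i, hw, hwi, hne⟩ := exists_apply_update_ne (φ := fun z : Cube m => f z j) h
  refine ⟨w, i, .of_apply_update_ne hf hne, fun hxy => hne ?_, hw⟩
  rw [← hxy, ← hwi, update_eq_self]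

theorem exists_influences_of_apply_ne {f : Cube m → Cube n} (hf : Monotone f) {x y : Cube m}
    {j : Fin n} (h : f x j ≠ f y j) : ∃ i, Influences f i j ∧ x i ≠ y i :=
  have ⟨w, i, hw, hne, _⟩ := exists_isPivotal_of_apply_ne hf h
  ⟨i, ⟨w, hw⟩, hne⟩

theorem exists_isPivotal_between {f : Cube m → Cube n} (hf : Monotone f) {x y : Cube m}
    (hxy : x ≤ y) {j : Fin n} (h : f x j ≠ f y j) :
    ∃ w i, IsPivotal f w i j ∧ x ≤ w.update i false ∧ w.update i true ≤ y := by
  obtain ⟨w, i, hpivotal, hi, hw⟩ := exists_isPivotal_of_apply_ne hf h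
  obtain ⟨hxi, hyi⟩ := Bool.lt_iff.1 ((hxy i).lt_of_ne hi)
  refine ⟨w, i, hpivotal, fun k => ?_, fun k => ?_⟩ <;> rw [Cube.update_apply] <;> split_ifs with hk
  · rw [hk, hxi]
  · exact (hw k).elim ge_of_eq fun hwk => hwk ▸ hxy k
  · rw [hk, hyi]
  · exact (hw k).elim (fun hwk => hwk ▸ hxy k) le_of_eq

theorem Influences.exists_of_comp {f : Cube l → Cube m} {g : Cube m → Cube n} (hf : Monotone f)
    (hg : Monotone g) {i : Fin l} {j : Fin n} (h : Influences (g ∘ f) i j) :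
    ∃ k, Influences f i k ∧ Influences g k j := by
  obtain ⟨w, hw⟩ := h
  obtain ⟨k, hk, hne⟩ := exists_influences_of_apply_ne hg (j := j)
    (x := f (w.update i false)) (y := f (w.update i true)) (by
      rw [show g (f (w.update i false)) j = false from hw false,
        show g (f (w.update i true)) j = true from hw true]
      exact Bool.false_ne_true)
  obtain ⟨i', hi', hne'⟩ := exists_influences_of_apply_ne hf hne
  obtain rfl : i' = i := by
    by_contra h
    simp only [Cube.update_of_ne h, ne_eq, not_true_eq_false] at hne'
  exact ⟨k, hi', hk⟩

theorem Influences.eq_of_id {i j : Fin n} (h : Influences (fun x : Cube n => x) i j) : j = i :=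
  have ⟨_, hw⟩ := h
  Cube.eq_of_update_apply_eq hw

theorem Influences.eq_succAbove_of_face {k : Fin (n + 1)} {ε : Bool} {i : Fin n} {j : Fin (n + 1)}
    (h : Influences (face k ε) i j) : j = k.succAbove i := by
  obtain ⟨w, hw⟩ := h
  obtain rfl | ⟨j, rfl⟩ := Fin.eq_self_or_eq_succAbove k j
  · simpa [face_apply_self] using hw (!ε)
  · rw [Cube.eq_of_update_apply_eq fun b => (face_apply_succAbove k ε _ j).symm.trans (hw b)]

theorem Influences.succAbove_eq_of_degen {k i : Fin (n + 1)} {j : Fin n}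
    (h : Influences (degen k) i j) : k.succAbove j = i :=
  have ⟨_, hw⟩ := h
  Cube.eq_of_update_apply_eq hw

theorem conn_apply_eq_of_forall (k : Fin (n + 1)) (ε : Bool) {j : Fin (n + 1)} {x y : Cube (n + 2)}
    (h : ∀ i, k.predAbove i = j → x i = y i) : conn k ε x j = conn k ε y j := by
  unfold conn
  split_ifs with hlt heq
  · exact h _ (Fin.predAbove_castSucc_of_le _ _ (Fin.le_of_lt hlt))
  · obtain rfl := Fin.ext heq
    rw [h _ (Fin.predAbove_castSucc_self j), h _ (Fin.predAbove_succ_self j)]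
  · obtain rfl := Fin.ext heq
    rw [h _ (Fin.predAbove_castSucc_self j), h _ (Fin.predAbove_succ_self j)]
  · exact h _ (Fin.predAbove_succ_of_le _ _ (not_lt.1 hlt))

theorem Influences.eq_predAbove_of_conn {k : Fin (n + 1)} {ε : Bool} {i : Fin (n + 2)}
    {j : Fin (n + 1)} (h : Influences (conn k ε) i j) : j = k.predAbove i := by
  obtain ⟨w, hw⟩ := h
  by_contra hne
  have heq : conn k ε (w.update i false) j = conn k ε (w.update i true) j :=
    conn_apply_eq_of_forall k ε fun a ha => by
      have hai : a ≠ i := by rintro rfl; exact hne ha.symm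
      rw [Cube.update_of_ne hai, Cube.update_of_ne hai]
  rw [hw, hw] at heq
  contradiction

theorem IsBoxMap.lt_of_influences {f : Cube m → Cube n} (hf : IsBoxMap f) {i i' : Fin m}
    {j j' : Fin n} (h : Influences f i j) (h' : Influences f i' j') (hlt : j < j') : i < i' := by
  induction hf with
  | id => rwa [← h.eq_of_id, ← h'.eq_of_id]
  | face k ε =>
    rwa [h.eq_succAbove_of_face, h'.eq_succAbove_of_face, Fin.succAbove_lt_succAbove_iff] at hlt
  | degen k =>
    rwa [← h.succAbove_eq_of_degen, ← h'.succAbove_eq_of_degen, Fin.succAbove_lt_succAbove_iff]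
  | conn k ε =>
    rw [h.eq_predAbove_of_conn, h'.eq_predAbove_of_conn] at hlt
    exact (Fin.predAbove_right_monotone k).reflect_lt hlt
  | comp hf hg ihf ihg =>
    obtain ⟨k, hik, hkj⟩ := h.exists_of_comp hf.monotone hg.monotone
    obtain ⟨k', hik', hkj'⟩ := h'.exists_of_comp hf.monotone hg.monotone
    exact ihf hik hik' (ihg hkj hkj' hlt)

theorem IsBoxMap.eq_of_influences {f : Cube m → Cube n} (hf : IsBoxMap f) {i : Fin m}
    {j j' : Fin n} (h : Influences f i j) (h' : Influences f i j') : j = j' :=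
  le_antisymm (not_lt.1 fun hlt => (hf.lt_of_influences h' h hlt).false)
    (not_lt.1 fun hlt => (hf.lt_of_influences h h' hlt).false)

theorem IsPivotal.congr {f : Cube m → Cube n} (hf : Monotone f) {v w : Cube m} {i : Fin m}
    {j : Fin n} (h : IsPivotal f v i j) (hvw : ∀ k, Influences f k j → v k = w k) :
    IsPivotal f w i j := by
  intro b
  refine Eq.trans ?_ (h b)
  by_contra hb
  obtain ⟨k, hk, hne⟩ := exists_influences_of_apply_ne hf hb
  exact hne (by rw [Cube.update_apply, Cube.update_apply, hvw k hk])

/-! ### Sections in `□₊` -/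

/-- The parametrization of the face of `[1]^m` through `c` whose free coordinates are those listed
by `p`. This is `Function.extend`, retyped as a map of cubes. -/
noncomputable def Cube.extend (p : Fin n → Fin m) (c : Cube m) (z : Cube n) : Cube m :=
  Function.extend p z c

theorem Cube.extend_apply {p : Fin n → Fin m} (hp : Injective p) (c : Cube m) (z : Cube n)
    (j : Fin n) : Cube.extend p c z (p j) = z j :=
  hp.extend_apply z c j

theorem Cube.extend_apply' (p : Fin n → Fin m) (c : Cube m) (z : Cube n) {k : Fin m}
    (hk : ¬∃ j, p j = k) : Cube.extend p c z k = c k :=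
  Function.extend_apply' z c k hk

theorem Cube.exists_extend_eq {p : Fin n → Fin m} (hp : Injective p) {c x : Cube m}
    (h : ∀ k, (¬∃ j, p j = k) → x k = c k) : ∃ z, Cube.extend p c z = x := by
  refine ⟨fun j => x (p j), Cube.ext fun k => ?_⟩
  by_cases hk : ∃ j, p j = k
  · obtain ⟨j, rfl⟩ := hk
    exact Cube.extend_apply hp c _ j
  · exact (Cube.extend_apply' p c _ hk).trans (h k hk).symm

theorem Cube.extend_succAbove_comp {p : Fin n → Fin m} (hp : Injective p) (q : Fin (m + 1))
    (c : Cube (m + 1)) :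
    Cube.extend (q.succAbove ∘ p) c = face q (c q) ∘ Cube.extend p (degen q c) := by
  ext z k
  rw [comp_apply]
  obtain rfl | ⟨k, rfl⟩ := Fin.eq_self_or_eq_succAbove q k
  · rw [face_apply_self]
    exact Cube.extend_apply' _ c z fun ⟨j, hj⟩ => Fin.succAbove_ne k (p j) hj
  · rw [face_apply_succAbove]
    by_cases hk : ∃ j, p j = k
    · obtain ⟨j, rfl⟩ := hk
      rw [Cube.extend_apply hp]
      exact Cube.extend_apply (Fin.succAbove_right_injective.comp hp) c z j
    · rw [Cube.extend_apply' p _ z hk, Cube.extend_apply' _ c z (by simpa using hk), degen]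

theorem Cube.extend_id (c : Cube n) : Cube.extend id c = id := by
  ext z k
  exact Cube.extend_apply injective_id c z k

theorem Cube.isFaceComposite_extend {p : Fin n → Fin m} (hp : StrictMono p) (c : Cube m) :
    IsFaceComposite (Cube.extend p c) := by
  have hle : n ≤ m := by simpa using Fintype.card_le_of_injective p hp.injective
  obtain ⟨k, rfl⟩ := Nat.exists_eq_add_of_le hle
  induction k with
  | zero =>
    have hsurj : Surjective p := Finite.surjective_of_injective hp.injective
    obtain rfl : p = id := (hp.range_inj strictMono_id).1 (by rw [hsurj.range_eq, Set.range_id])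
    exact Cube.extend_id c ▸ .id
  | succ k ih =>
    have hsurj : ¬Surjective p := fun h => by simpa using Fintype.card_le_of_surjective p h
    obtain ⟨q, hq⟩ := not_forall.1 hsurj
    choose p' hp' using fun j => Fin.exists_succAbove_eq fun h : p j = q => hq ⟨j, h⟩
    obtain rfl : q.succAbove ∘ p' = p := funext hp'
    have hp'_mono : StrictMono p' := fun i j hij => Fin.succAbove_lt_succAbove_iff.1 (hp hij)
    rw [Cube.extend_succAbove_comp hp'_mono.injective]
    exact .comp (ih hp'_mono _ (Nat.le_add_right n k)) (.face q _)

theorem IsBoxMap.strictMono_of_isPivotal {f : Cube m → Cube n} (hf : IsBoxMap f) {c : Cube m}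
    {p : Fin n → Fin m} (hc : ∀ j, IsPivotal f c (p j) j) : StrictMono p :=
  fun j j' => hf.lt_of_influences ⟨c, hc j⟩ ⟨c, hc j'⟩

theorem IsBoxMap.comp_extend {f : Cube m → Cube n} (hf : IsBoxMap f) {c : Cube m}
    {p : Fin n → Fin m} (hc : ∀ j, IsPivotal f c (p j) j) : f ∘ Cube.extend p c = _root_.id := by
  have hp := (hf.strictMono_of_isPivotal hc).injective
  ext z j
  refine Eq.trans ?_ (hc j (z j))
  by_contra hne
  obtain ⟨k, hk, hne⟩ := exists_influences_of_apply_ne hf.monotone hne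
  by_cases hkp : ∃ j', p j' = k
  · obtain ⟨j', rfl⟩ := hkp
    obtain rfl : j = j' := hf.eq_of_influences hk ⟨c, hc j'⟩
    exact hne (by rw [Cube.extend_apply hp, Cube.update_self])
  · have hkj : k ≠ p j := fun h => hkp ⟨j, h.symm⟩
    exact hne (by rw [Cube.extend_apply' _ _ _ hkp, Cube.update_of_ne hkj])

theorem isPivotal_of_comp_extend {g : Cube m → Cube n} {c : Cube m} {p : Fin n → Fin m}
    (hp : Injective p) (h : g ∘ Cube.extend p c = id) (j : Fin n) : IsPivotal g c (p j) j := by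
  intro b
  obtain ⟨z, hz⟩ := Cube.exists_extend_eq hp (c := c) (x := c.update (p j) b) fun k hk =>
    Cube.update_of_ne (fun h => hk ⟨j, h.symm⟩) c b
  calc
    g (c.update (p j) b) j = z j := by rw [← hz]; exact congrFun (congrFun h z) j
    _ = b := by rw [← Cube.extend_apply hp c z j, hz, Cube.update_self]

theorem exists_isPivotal_of_surjective {f : Cube m → Cube n} (hf : Monotone f)
    (hsurj : Surjective f) (j : Fin n) : ∃ w i, IsPivotal f w i j := by
  obtain ⟨x, hx⟩ := hsurj ⊥
  obtain ⟨y, hy⟩ := hsurj ⊤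
  have hne : f x j ≠ f y j := by rw [hx, hy]; exact Bool.false_ne_true
  obtain ⟨w, i, hw, -⟩ := exists_isPivotal_of_apply_ne hf hne
  exact ⟨w, i, hw⟩

theorem IsPivotal.exists_forall_isPivotal {f : Cube m → Cube n} (hf : IsBoxMap f)
    (hsurj : Surjective f) {w : Cube m} {i : Fin m} {j : Fin n} (h : IsPivotal f w i j) :
    ∃ (c : Cube m) (p : Fin n → Fin m), p j = i ∧
      (∀ k, (∀ j', Influences f k j' → j' = j) → c k = w k) ∧ ∀ j', IsPivotal f c (p j') j' := by
  have hedge : ∀ j', ∃ v q, IsPivotal f v q j' ∧ (j' = j → v = w ∧ q = i) := fun j' => by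
    by_cases hj' : j' = j
    · exact ⟨w, i, hj' ▸ h, fun _ => ⟨rfl, rfl⟩⟩
    · obtain ⟨v, q, hv⟩ := exists_isPivotal_of_surjective hf.monotone hsurj j'
      exact ⟨v, q, hv, fun h => absurd h hj'⟩
  choose v p hv hvj using hedge
  have hcoord : ∀ k, ∃ b, (∀ j', Influences f k j' → v j' k = b) ∧
      ((∀ j', Influences f k j' → j' = j) → b = w k) := fun k => by
    by_cases hk : ∃ j', Influences f k j'
    · obtain ⟨j', hj'⟩ := hk
      exact ⟨v j' k, fun a ha => by rw [hf.eq_of_influences ha hj'],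
        fun hall => by rw [(hvj j' (hall j' hj')).1]⟩
    · exact ⟨w k, fun a ha => absurd ⟨a, ha⟩ hk, fun _ => rfl⟩
  choose c hc hcw using hcoord
  exact ⟨c, p, (hvj j rfl).2, hcw, fun j' => (hv j').congr hf.monotone fun k hk => hc k j' hk⟩

section Sections

variable {f g : Cube m → Cube n} (hf : IsBoxMap f) (hsurj : Surjective f) (hg : IsBoxMap g)
  (hsection : ∀ s, IsFaceComposite s → f ∘ s = _root_.id → g ∘ s = _root_.id)

include hf hsection in
theorem IsBoxMap.isPivotal_of_sections {c : Cube m} {p : Fin n → Fin m}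
    (hc : ∀ j, IsPivotal f c (p j) j) (j : Fin n) : IsPivotal g c (p j) j :=
  have hp := hf.strictMono_of_isPivotal hc
  isPivotal_of_comp_extend hp.injective
    (hsection _ (Cube.isFaceComposite_extend hp c) (hf.comp_extend hc)) j

include hf hsurj hsection in
theorem IsBoxMap.influences_of_sections {i : Fin m} {j : Fin n} (h : Influences f i j) :
    Influences g i j := by
  obtain ⟨w, hw⟩ := h
  obtain ⟨c, p, rfl, -, hc⟩ := hw.exists_forall_isPivotal hf hsurj
  exact ⟨c, hf.isPivotal_of_sections hsection hc j⟩

include hf hsurj hg hsection in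
theorem IsPivotal.of_sections {w : Cube m} {i : Fin m} {j : Fin n} (h : IsPivotal f w i j) :
    IsPivotal g w i j := by
  obtain ⟨c, p, rfl, hcw, hc⟩ := h.exists_forall_isPivotal hf hsurj
  refine (hf.isPivotal_of_sections hsection hc j).congr hg.monotone fun k hk => hcw k ?_
  exact fun j' hj' => hg.eq_of_influences (hf.influences_of_sections hsurj hsection hj') hk

include hf hsurj hg hsection in
theorem IsBoxMap.eq_of_sections : f = g := by
  ext x j
  have hbot : f ⊥ = ⊥ := by
    obtain ⟨y, hy⟩ := hsurj ⊥
    exact eq_bot_mono (hf.monotone bot_le) hy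
  have htop : f ⊤ = ⊤ := by
    obtain ⟨y, hy⟩ := hsurj ⊤
    exact eq_top_mono (hf.monotone le_top) hy
  cases hx : f x j with
  | false =>
    have hne : f x j ≠ f ⊤ j := by rw [hx, htop]; exact Bool.false_ne_true
    obtain ⟨w, i, hw, hle, -⟩ := exists_isPivotal_between hf.monotone le_top hne
    have hg_le := hg.monotone hle j
    rw [hw.of_sections hf hsurj hg hsection] at hg_le
    exact (le_bot_iff.1 hg_le).symm
  | true =>
    have hne : f ⊥ j ≠ f x j := by rw [hx, hbot]; exact Bool.false_ne_true
    obtain ⟨w, i, hw, -, hle⟩ := exists_isPivotal_between hf.monotone bot_le hne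
    have hle_g := hg.monotone hle j
    rw [hw.of_sections hf hsurj hg hsection] at hle_g
    exact (top_le_iff.1 hle_g).symm

end Sections

theorem box_is_EZ_reedy_general :
    (∀ {m n : ℕ} (f : Cube m → Cube n), IsBoxMap f →
      ∃ (k : ℕ) (g : Cube m → Cube k) (h : Cube k → Cube n),
        IsMinus g ∧ IsFaceComposite h ∧ f = h ∘ g ∧
        (∀ (k' : ℕ) (g' : Cube m → Cube k') (h' : Cube k' → Cube n),
          IsMinus g' → IsFaceComposite h' → f = h' ∘ g' →
          k = k' ∧ HEq g g' ∧ HEq h h')) ∧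
    (∀ {m n : ℕ} (f : Cube m → Cube n), IsMinus f →
      (n ≤ m ∧ (∀ h : m = n, ∀ (x : Cube m) (j : Fin n), f x j = x (Fin.cast h.symm j)))) ∧
    (∀ {m n : ℕ} (f : Cube m → Cube n), IsFaceComposite f →
      (m ≤ n ∧ (∀ h : m = n, ∀ (x : Cube m) (j : Fin n), f x j = x (Fin.cast h.symm j)))) ∧
    (∀ {m n : ℕ} (f : Cube m → Cube n), IsMinus f →
      (∃ s : Cube n → Cube m, IsFaceComposite s ∧ f ∘ s = id) ∧
      (∀ g : Cube m → Cube n, IsBoxMap g →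
        (∀ s : Cube n → Cube m, IsFaceComposite s → f ∘ s = id → g ∘ s = id) → f = g)) := by
  refine ⟨fun f hf => ?_, fun f hf => ⟨hf.le, hf.apply_eq_of_eq⟩,
    fun f hf => ⟨hf.le, hf.apply_eq_of_eq⟩, fun f hf => ⟨hf.exists_section, fun g hg hsection =>
      hf.isBoxMap.eq_of_sections hf.surjective hg hsection⟩⟩
  obtain ⟨k, g, h, hg, hh, rfl⟩ := hf.exists_factorization
  exact ⟨k, g, h, hg, hh, rfl, fun _ _ _ hg' hh' e => factorization_unique hg hh hg' hh' e⟩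

/-- The box category `□` is an EZ Reedy category: with degree `deg [1]^n = n`, every morphism
factors uniquely as a map of `□₋` (generated by degeneracies and connections, strictly lowering
the degree when not an identity) followed by a map of `□₊` (generated by faces, strictly raising
the degree when not an identity); moreover every morphism of `□₋` is a split epimorphism and is
determined by its set of sections. -/
theorem box_is_EZ_reedy :
    (∀ {m n : ℕ} (f : Cube m → Cube n), IsBoxMap f →
      ∃ (k : ℕ) (g : Cube m → Cube k) (h : Cube k → Cube n),
        IsMinus g ∧ IsFaceComposite h ∧ f = h ∘ g ∧
        (∀ (k' : ℕ) (g' : Cube m → Cube k') (h' : Cube k' → Cube n),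
          IsMinus g' → IsFaceComposite h' → f = h' ∘ g' →
          k = k' ∧ HEq g g' ∧ HEq h h')) ∧
    (∀ {m n : ℕ} (f : Cube m → Cube n), IsMinus f →
      (n ≤ m ∧ (∀ h : m = n, ∀ (x : Cube m) (j : Fin n), f x j = x (Fin.cast h.symm j)))) ∧
    (∀ {m n : ℕ} (f : Cube m → Cube n), IsFaceComposite f →
      (m ≤ n ∧ (∀ h : m = n, ∀ (x : Cube m) (j : Fin n), f x j = x (Fin.cast h.symm j)))) ∧
    (∀ {m n : ℕ} (f : Cube m → Cube n), IsMinus f →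
      (∃ s : Cube n → Cube m, IsBoxMap s ∧ f ∘ s = id) ∧
      (∀ g : Cube m → Cube n, IsMinus g →
        (∀ s : Cube n → Cube m, IsBoxMap s → (f ∘ s = id ↔ g ∘ s = id)) → f = g)) := by
  have ⟨hfactor, hminus, hplus, hEZ⟩ := box_is_EZ_reedy_general
  exact ⟨hfactor, hminus, hplus, fun f hf => ⟨(hEZ f hf).1.imp fun _ hs => hs.imp_left (·.isBoxMap),
    fun g hg hiff => (hEZ f hf).2 g hg.isBoxMap fun s hs => (hiff s hs.isBoxMap).1⟩⟩
end
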